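/- arXiv:2508.19066 — 9 statements merged into one kernel-verified Lean document; each statement's English description precedes it below -/
import Mathlib

section
/- For every a ∈ A(ℂ) with first-row parameters a₁, …, a_{n−1} and every 1 ≤ i ≤ n−1, the sum of all principal i×i minors of a (that is, the value χ_i(a) of the i-th fundamental character of SL(n), equal to the trace of the i-th exterior power of a) equals (−1)^{i−1}·a_i. Consequently the map a ↦ (χ₁(a), …, χ_{n−1}(a)) is a bijection from A(ℂ) onto ℂ^{n−1}. -/
/-- The set of `R`-points of Steinberg's cross-section `A = U(c⁻¹)·c̄` for `G = SL(n)` and the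
standard Coxeter element `c = s₁s₂⋯s_{n−1}`: the first row is `(a₁, …, a_{n−1}, (−1)^{n−1})`,
the subdiagonal entries are `1`, and all remaining entries are `0`. -/
def IsSteinbergA {n : ℕ} {R : Type*} [CommRing R] (m : Matrix (Fin n) (Fin n) R) : Prop :=
  (∀ i j : Fin n, (i : ℕ) = 0 → (j : ℕ) = n - 1 → m i j = (-1) ^ (n - 1)) ∧
  (∀ i j : Fin n, (i : ℕ) = (j : ℕ) + 1 → m i j = 1) ∧
  (∀ i j : Fin n, (i : ℕ) ≠ 0 → (i : ℕ) ≠ (j : ℕ) + 1 → m i j = 0)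

/-- The sum of all principal `i × i` minors of an `n × n` matrix, i.e. the trace of the `i`-th
exterior power, i.e. the value of the `i`-th fundamental character. -/
noncomputable def principalMinorSum {n : ℕ} {R : Type*} [CommRing R]
    (m : Matrix (Fin n) (Fin n) R) (i : ℕ) : R :=
  ∑ S ∈ ((Finset.univ : Finset (Fin n)).powersetCard i).attach,
    Matrix.det (Matrix.of fun a b : Fin i =>
      m ((S.1.orderIsoOfFin (Finset.mem_powersetCard.mp S.2).2 a : Fin n))
        ((S.1.orderIsoOfFin (Finset.mem_powersetCard.mp S.2).2 b : Fin n)))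

/-! Let `m` be a companion matrix with an arbitrary first row. A set `S` of `k` indices that is not
an initial segment contains some `s ≠ 0` with `s - 1 ∉ S`, and then the row of the principal
submatrix indexed by `s` vanishes. So only the leading principal minor contributes to the sum; it is
the determinant of a smaller companion matrix, and expanding along its last column gives
`(-1) ^ (k - 1) * m 0 (k - 1)`. Hence the characters are, up to signs, the affine coordinates on the
cross-section. -/

section OrderEmbedding

variable {k n : ℕ}

theorem exists_apply_ne_and_forall_lt_apply_eq (h : k ≤ n) {e : Fin k ↪o Fin n}
    (he : e ≠ Fin.castLEOrderEmb h) : ∃ i, (e i : ℕ) ≠ i ∧ ∀ j < i, (e j : ℕ) = j := by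
  have moved : {i | (e i : ℕ) ≠ i}.Nonempty := by
    by_contra! fixed
    exact he (RelEmbedding.ext fun i => Fin.ext (by simpa using Set.ext_iff.mp fixed i))
  obtain ⟨i, hi, least⟩ := wellFounded_lt.has_min _ moved
  exact ⟨i, hi, fun j hj => not_not.mp fun hne => least j hne hj⟩

theorem exists_apply_ne_zero_and_forall_apply_ne_add_one (h : k ≤ n) {e : Fin k ↪o Fin n}
    (he : e ≠ Fin.castLEOrderEmb h) : ∃ i, (e i : ℕ) ≠ 0 ∧ ∀ j, (e i : ℕ) ≠ e j + 1 := by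
  obtain ⟨i, hi, fixed⟩ := exists_apply_ne_and_forall_lt_apply_eq h he
  have lt_apply : (i : ℕ) < e i := by
    by_contra! le
    have lt : (e i : ℕ) < i := lt_of_le_of_ne le hi
    let j : Fin k := ⟨e i, lt.trans i.isLt⟩
    have apply_eq : e j = e i := Fin.ext (fixed j lt)
    exact lt.ne (congrArg Fin.val (e.injective apply_eq))
  refine ⟨i, by lia, fun j hj => ?_⟩
  have hji : j < i := e.lt_iff_lt.mp (Fin.lt_def.mpr (by lia))
  have := fixed j hji
  lia

end OrderEmbedding

namespace principalMinorSum

variable {R : Type*} [CommRing R] {n k : ℕ}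

theorem eq_sum_powersetCard (m : Matrix (Fin n) (Fin n) R) (k : ℕ) :
    principalMinorSum m k = ∑ S : Set.powersetCard (Fin n) k,
      (m.submatrix (Set.powersetCard.ofFinEmbEquiv.symm S)
        (Set.powersetCard.ofFinEmbEquiv.symm S)).det := by
  rw [principalMinorSum, ← Finset.univ_eq_attach]
  exact Fintype.sum_equiv (Equiv.subtypeEquivRight fun S => by simp) _ _ fun S => rfl

theorem eq_det_submatrix (m : Matrix (Fin n) (Fin n) R) (e : Fin k ↪o Fin n)
    (vanish : ∀ f : Fin k ↪o Fin n, f ≠ e → (m.submatrix f f).det = 0) :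
    principalMinorSum m k = (m.submatrix e e).det := by
  rw [eq_sum_powersetCard, Fintype.sum_eq_single (Set.powersetCard.ofFinEmbEquiv e),
    Equiv.symm_apply_apply]
  exact fun S hS => vanish _ fun h => hS ((Equiv.symm_apply_eq _).mp h)

end principalMinorSum

/-- The companion matrix, in the convention with the coefficients in the first row: its first row is
`v`, its subdiagonal entries are `1` and all other entries are `0`. -/
def companionOfRow {R : Type*} [Zero R] [One R] {n : ℕ} (v : Fin n → R) :
    Matrix (Fin n) (Fin n) R :=
  .of fun i j => if (i : ℕ) = 0 then v j else if (i : ℕ) = j + 1 then 1 else 0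

namespace companionOfRow

section ZeroOne

variable {R : Type*} [Zero R] [One R] {n k : ℕ}

theorem submatrix_castLE (h : k ≤ n) (v : Fin n → R) :
    (companionOfRow v).submatrix (Fin.castLE h) (Fin.castLE h) =
      companionOfRow (v ∘ Fin.castLE h) := rfl

theorem submatrix_succ_castSucc (v : Fin (k + 1) → R) :
    (companionOfRow v).submatrix Fin.succ Fin.castSucc = 1 := by
  ext i j
  simp [companionOfRow, Matrix.one_apply, Fin.val_inj]

end ZeroOne

variable {R : Type*} [CommRing R] {n k : ℕ}

theorem det_eq (v : Fin (k + 1) → R) : (companionOfRow v).det = (-1) ^ k * v (Fin.last k) := by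
  rw [Matrix.det_succ_column _ (Fin.last k), Fintype.sum_eq_single 0, Fin.succAbove_zero,
    Fin.succAbove_last, submatrix_succ_castSucc]
  · simp [companionOfRow]
  · intro i hi
    simp [companionOfRow, hi, i.isLt.ne]

theorem det_submatrix_eq_zero (h : k ≤ n) (v : Fin n → R) {e : Fin k ↪o Fin n}
    (he : e ≠ Fin.castLEOrderEmb h) : ((companionOfRow v).submatrix e e).det = 0 := by
  obtain ⟨i, hi, hne⟩ := exists_apply_ne_zero_and_forall_apply_ne_add_one h he
  exact Matrix.det_eq_zero_of_row_eq_zero i fun j => by simp [companionOfRow, hi, hne j]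

theorem principalMinorSum_succ (v : Fin n → R) (j : Fin n) :
    principalMinorSum (companionOfRow v) (j + 1) = (-1) ^ (j : ℕ) * v j := by
  have h : (j : ℕ) + 1 ≤ n := j.isLt
  calc principalMinorSum (companionOfRow v) (j + 1)
      = ((companionOfRow v).submatrix (Fin.castLE h) (Fin.castLE h)).det :=
        principalMinorSum.eq_det_submatrix _ (Fin.castLEOrderEmb h)
          fun _ => det_submatrix_eq_zero h v
    _ = (companionOfRow (v ∘ Fin.castLE h)).det := by rw [submatrix_castLE]
    _ = (-1) ^ (j : ℕ) * v j := det_eq _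

end companionOfRow

namespace IsSteinbergA

variable {R : Type*} [CommRing R] {n : ℕ}

/-- The first row `(a₁, …, a_{n−1}, (−1)^{n−1})` of the element of Steinberg's cross-section with
parameters `a`, where `a i` stands for `a_{i+1}`. -/
def firstRow (a : Fin (n - 1) → R) (j : Fin n) : R :=
  if h : (j : ℕ) < n - 1 then a ⟨j, h⟩ else (-1) ^ (n - 1)

theorem companionOfRow_firstRow (a : Fin (n - 1) → R) :
    IsSteinbergA (companionOfRow (firstRow a)) := by
  refine ⟨fun i j hi hj => ?_, fun i j hij => ?_, fun i j hi hij => ?_⟩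
  · simp [companionOfRow, firstRow, hi, hj]
  · simp [companionOfRow, hij]
  · simp [companionOfRow, hi, hij]

variable {m : Matrix (Fin n) (Fin n) R} {i₀ : Fin n}

theorem companionOfRow_eq (hm : IsSteinbergA m) (hi₀ : (i₀ : ℕ) = 0) :
    companionOfRow (m i₀) = m := by
  ext i j
  simp only [companionOfRow, Matrix.of_apply]
  split_ifs with hi hij
  · rw [Fin.ext (hi.trans hi₀.symm)]
  · exact (hm.2.1 i j hij).symm
  · exact (hm.2.2 i j hi hij).symm

theorem firstRow_eq (hm : IsSteinbergA m) (hi₀ : (i₀ : ℕ) = 0) :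
    firstRow (fun j => m i₀ (j.castLE (Nat.sub_le n 1))) = m i₀ := by
  funext j
  by_cases hj : (j : ℕ) < n - 1
  · simp [firstRow, hj]
  · simp [firstRow, hj, hm.1 i₀ j hi₀ (by lia)]

theorem principalMinorSum_succ (hm : IsSteinbergA m) (hi₀ : (i₀ : ℕ) = 0) (j : Fin n) :
    principalMinorSum m (j + 1) = (-1) ^ (j : ℕ) * m i₀ j := by
  simpa only [hm.companionOfRow_eq hi₀] using companionOfRow.principalMinorSum_succ (m i₀) j

/-- The identification of Steinberg's cross-section with affine space, sending a matrix to the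
parameters `a₁, …, a_{n−1}` in its first row. -/
def coordinates : {m : Matrix (Fin n) (Fin n) R // IsSteinbergA m} ≃ (Fin (n - 1) → R) where
  toFun m j := m.1 ⟨0, Nat.zero_lt_of_lt (Nat.lt_of_lt_pred j.isLt)⟩ (j.castLE (Nat.sub_le n 1))
  invFun a := ⟨companionOfRow (firstRow a), companionOfRow_firstRow a⟩
  left_inv := by
    rintro ⟨m, hm⟩
    refine Subtype.ext (Matrix.ext fun i j => ?_)
    have hi₀ : ((⟨0, i.pos⟩ : Fin n) : ℕ) = 0 := rfl
    have row_eq := hm.firstRow_eq hi₀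
    exact congrFun₂ ((congrArg companionOfRow row_eq).trans (hm.companionOfRow_eq hi₀)) i j
  right_inv a := by
    ext j
    simp [companionOfRow, firstRow]

theorem principalMinorSum_eq_coordinates
    (m : {m : Matrix (Fin n) (Fin n) R // IsSteinbergA m}) (i : Fin (n - 1)) :
    principalMinorSum m.1 ((i : ℕ) + 1) = (-1) ^ (i : ℕ) * coordinates m i :=
  m.2.principalMinorSum_succ rfl (i.castLE (Nat.sub_le n 1))

theorem bijective_principalMinorSum :
    Function.Bijective fun (m : {m : Matrix (Fin n) (Fin n) R // IsSteinbergA m})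
      (i : Fin (n - 1)) => principalMinorSum m.1 ((i : ℕ) + 1) := by
  let signs : (Fin (n - 1) → R) ≃ (Fin (n - 1) → R) :=
    Equiv.piCongrRight fun i => Units.mulLeft ((-1) ^ (i : ℕ))
  convert (coordinates.trans signs).bijective using 1
  ext m i
  simp [signs, principalMinorSum_eq_coordinates]

end IsSteinbergA

theorem stmt_1_general {R : Type*} [CommRing R] (n : ℕ) :
    (∀ m : Matrix (Fin n) (Fin n) R, IsSteinbergA m →
      ∀ i : ℕ, 1 ≤ i → ∀ i₀ j : Fin n, (i₀ : ℕ) = 0 → (j : ℕ) = i - 1 →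
        principalMinorSum m i = (-1) ^ (i - 1) * m i₀ j) ∧
    Function.Bijective
      (fun a : {m : Matrix (Fin n) (Fin n) R // IsSteinbergA m} =>
        fun i : Fin (n - 1) => principalMinorSum a.1 ((i : ℕ) + 1)) := by
  refine ⟨fun m hm i hi i₀ j hi₀ hj => ?_, IsSteinbergA.bijective_principalMinorSum⟩
  obtain rfl : i = j + 1 := by lia
  exact hm.principalMinorSum_succ hi₀ j

/-- For every `a ∈ A(ℂ)` with first-row parameters `a₁, …, a_{n−1}` and every
`1 ≤ i ≤ n − 1`, the sum of all principal `i × i` minors of `a` equals `(−1)^{i−1} · a_i`;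
consequently `a ↦ (χ₁(a), …, χ_{n−1}(a))` is a bijection from `A(ℂ)` onto `ℂ^{n−1}`. -/
theorem stmt_1 (n : ℕ) (hn : 2 ≤ n) :
    (∀ m : Matrix (Fin n) (Fin n) ℂ, IsSteinbergA m →
      ∀ i : ℕ, 1 ≤ i → i ≤ n - 1 → ∀ i₀ j : Fin n, (i₀ : ℕ) = 0 → (j : ℕ) = i - 1 →
        principalMinorSum m i = (-1) ^ (i - 1) * m i₀ j) ∧
    Function.Bijective
      (fun a : {m : Matrix (Fin n) (Fin n) ℂ // IsSteinbergA m} =>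
        fun i : Fin (n - 1) => principalMinorSum a.1 ((i : ℕ) + 1)) :=
  ⟨fun m hm i hi _ => (stmt_1_general n).1 m hm i hi, (stmt_1_general n).2⟩
end

section
/- Every regular element g of SL(n, ℂ), i.e., every g ∈ SL(n, ℂ) whose minimal polynomial has degree n (equivalently, whose minimal and characteristic polynomials coincide), is conjugate under SL(n, ℂ) to exactly one element of A(ℂ). In other words, A(ℂ) is a cross-section of the collection of conjugacy classes of regular elements of SL(n, ℂ). -/
/-!
Let the row vector `w` be cyclic for `g`, and let `H` be the matrix with rows
`w * g ^ (n - 1), …, w * g, w`. Multiplying `H` on the right by `g` moves each row up by one place,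
so every row of `H * g * H⁻¹` except the first is a standard basis vector. Such a matrix lies in
the cross-section exactly when its determinant is `1`. A cyclic vector exists because the
`K[X]`-module defined by `g` has an element whose annihilator is that of the whole module, and
rescaling `w` by an `n`-th root makes `det H = 1`. Conversely, the first row of an element of the
cross-section lists the coefficients of its characteristic polynomial, by Cayley–Hamilton.
-/

section CyclicVector

open Polynomial

theorem exists_linearIndependent_pow_smul {K A V : Type*} [Field K] [Ring A] [Algebra K A]
    [AddCommGroup V] [Module K V] [Module A V] [IsScalarTower K A V] [FaithfulSMul A V]
    [Module.Finite K V] (a : A) :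
    ∃ v : V, LinearIndependent K fun i : Fin (minpoly K a).natDegree => a ^ (i : ℕ) • v := by
  obtain ⟨v, hv⟩ :=
    Module.exists_ker_toSpanSingleton_eq_annihilator (R := K[X]) (M := Module.AEval K V a)
  set w := (Module.AEval.of K V a).symm v
  have aeval_eq_zero (p : K[X]) (hp : aeval a p • w = 0) : aeval a p = 0 := by
    rwa [← RingHom.mem_ker, ← Module.AEval.annihilator_eq_ker_aeval (M := V), ← hv,
      LinearMap.mem_ker, LinearMap.toSpanSingleton_apply,
      ← (Module.AEval.of K V a).symm.map_eq_zero_iff, Module.AEval.of_symm_smul]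
  refine ⟨w, Fintype.linearIndependent_iff.2 fun c hc => ?_⟩
  have aeval_sum : aeval a (∑ i : Fin (minpoly K a).natDegree, monomial (i : ℕ) (c i)) =
      ∑ i, c i • a ^ (i : ℕ) := by
    simp only [map_sum, aeval_monomial, Algebra.smul_def]
  have sum_eq_zero : ∑ i, c i • a ^ (i : ℕ) = 0 := by
    rw [← aeval_sum]
    apply aeval_eq_zero
    simpa only [aeval_sum, Finset.sum_smul, smul_assoc] using hc
  exact Fintype.linearIndependent_iff.1 (linearIndependent_pow a) c sum_eq_zero

end CyclicVector

section Transpose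

open Matrix Polynomial

variable {R n : Type*} [CommRing R] [Fintype n] [DecidableEq n]

theorem aeval_transpose (M : Matrix n n R) (p : R[X]) : aeval Mᵀ p = (aeval M p)ᵀ := by
  simp only [aeval_eq_sum_range, transpose_sum, transpose_smul, transpose_pow]

theorem minpoly_transpose (M : Matrix n n R) : minpoly R Mᵀ = minpoly R M := by
  have isIntegral_transpose_iff : IsIntegral R Mᵀ ↔ IsIntegral R M :=
    iff_of_true (isIntegral _) (isIntegral _)
  classical
  simp_rw [minpoly, isIntegral_transpose_iff, ← aeval_def, aeval_transpose, transpose_eq_zero]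

end Transpose

section Krylov

open Matrix

/-- The Krylov matrix of a row vector `w` and a square matrix `M`, with rows
`w * M ^ (n - 1), …, w * M, w`. The exponents decrease so that conjugating `M` by it gives a matrix
with ones below the diagonal. -/
def krylovMatrix {n : ℕ} {R : Type*} [CommRing R] (w : Fin n → R) (M : Matrix (Fin n) (Fin n) R) :
    Matrix (Fin n) (Fin n) R :=
  of fun i => w ᵥ* M ^ (i.rev : ℕ)

theorem krylovMatrix_smul {n : ℕ} {R : Type*} [CommRing R] (t : R) (w : Fin n → R)
    (M : Matrix (Fin n) (Fin n) R) : krylovMatrix (t • w) M = t • krylovMatrix w M :=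
  ext_row fun _ => smul_vecMul t w _

theorem krylovMatrix_row_castSucc {m : ℕ} {R : Type*} [CommRing R] (w : Fin (m + 1) → R)
    (M : Matrix (Fin (m + 1)) (Fin (m + 1)) R) (i : Fin m) :
    (krylovMatrix w M).row i.castSucc = (krylovMatrix w M * M).row i.succ := by
  change w ᵥ* M ^ (i.castSucc.rev : ℕ) = w ᵥ* M ^ (i.succ.rev : ℕ) ᵥ* M
  rw [vecMul_vecMul, ← pow_succ, Fin.rev_castSucc, Fin.rev_succ, Fin.val_succ, Fin.val_castSucc]

theorem exists_isUnit_krylovMatrix {n : ℕ} {K : Type*} [Field K] {M : Matrix (Fin n) (Fin n) K}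
    (hM : (minpoly K M).natDegree = n) : ∃ w, IsUnit (krylovMatrix w M) := by
  obtain ⟨w, hw⟩ := exists_linearIndependent_pow_smul (K := K) (V := Fin n → K) (toLin' Mᵀ)
  rw [minpoly_toLin', minpoly_transpose, hM] at hw
  have row_eq : (krylovMatrix w M).row = (fun i : Fin n => toLin' Mᵀ ^ (i : ℕ) • w) ∘ Fin.rev := by
    funext i
    change w ᵥ* M ^ (i.rev : ℕ) = (toLin' Mᵀ ^ (i.rev : ℕ)) w
    rw [← toLin'_pow, toLin'_apply, ← transpose_pow, mulVec_transpose]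
  refine ⟨w, linearIndependent_rows_iff_isUnit.1 ?_⟩
  rw [row_eq]
  exact hw.comp Fin.rev Fin.rev_injective

theorem exists_det_krylovMatrix_eq_one {n : ℕ} {K : Type*} [Field K]
    (hroot : ∀ x : K, ∃ y, y ^ n = x) {M : Matrix (Fin n) (Fin n) K}
    (hM : (minpoly K M).natDegree = n) : ∃ w, (krylovMatrix w M).det = 1 := by
  obtain ⟨w, hw⟩ := exists_isUnit_krylovMatrix hM
  obtain ⟨t, ht⟩ := hroot (krylovMatrix w M).det⁻¹
  refine ⟨t • w, ?_⟩
  rw [krylovMatrix_smul, det_smul, Fintype.card_fin, ht,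
    inv_mul_cancel₀ ((isUnit_iff_isUnit_det _).1 hw).ne_zero]

end Krylov

section CompanionForm

open Matrix Polynomial

variable {m : ℕ} {R : Type*} [CommRing R]

/-- A companion matrix with its free entries in the first row: each later row is the standard basis
vector with its `1` just below the diagonal. -/
def IsCompanionForm (a : Matrix (Fin (m + 1)) (Fin (m + 1)) R) : Prop :=
  ∀ i : Fin m, a.row i.succ = Pi.single i.castSucc 1

theorem isCompanionForm_krylovMatrix_conj {w : Fin (m + 1) → R}
    {M : Matrix (Fin (m + 1)) (Fin (m + 1)) R} (hw : IsUnit (krylovMatrix w M).det) :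
    IsCompanionForm (krylovMatrix w M * M * (krylovMatrix w M)⁻¹) := by
  intro i
  calc (krylovMatrix w M * M * (krylovMatrix w M)⁻¹).row i.succ
    _ = (krylovMatrix w M * M).row i.succ ᵥ* (krylovMatrix w M)⁻¹ := rfl
    _ = (krylovMatrix w M).row i.castSucc ᵥ* (krylovMatrix w M)⁻¹ := by
      rw [krylovMatrix_row_castSucc]
    _ = Pi.single i.castSucc 1 := by
      rw [← single_one_vecMul, vecMul_vecMul, mul_nonsing_inv _ hw, vecMul_one]

namespace IsCompanionForm

variable {a b : Matrix (Fin (m + 1)) (Fin (m + 1)) R}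

theorem single_last_vecMul_pow (ha : IsCompanionForm a) (i : Fin (m + 1)) :
    Pi.single (Fin.last m) 1 ᵥ* a ^ (i : ℕ) = Pi.single i.rev 1 := by
  induction i using Fin.induction with
  | zero => rw [Fin.val_zero, pow_zero, vecMul_one, Fin.rev_zero]
  | succ i ih =>
    rw [Fin.val_succ, pow_succ, ← vecMul_vecMul, ← Fin.val_castSucc, ih, Fin.rev_castSucc,
      single_one_vecMul, ha, Fin.rev_succ]

theorem single_last_vecMul_pow_succ (ha : IsCompanionForm a) :
    Pi.single (Fin.last m) 1 ᵥ* a ^ (m + 1) = a.row 0 := by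
  have h := ha.single_last_vecMul_pow (Fin.last m)
  rw [Fin.val_last, Fin.rev_last] at h
  rw [pow_succ, ← vecMul_vecMul, h, single_one_vecMul]

theorem apply_zero_eq_neg_charpoly_coeff (ha : IsCompanionForm a) (j : Fin (m + 1)) :
    a 0 j = -a.charpoly.coeff j.rev := by
  nontriviality R
  have hdeg : a.charpoly.natDegree = m + 1 := by
    rw [charpoly_natDegree_eq_dim, Fintype.card_fin]
  have hlead := a.charpoly_monic.coeff_natDegree
  rw [hdeg] at hlead
  have cayley_hamilton :
      ∑ i : Fin (m + 1), a.charpoly.coeff i • a ^ (i : ℕ) + a ^ (m + 1) = 0 := by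
    rw [← a.aeval_self_charpoly, aeval_eq_sum_range, hdeg, Finset.sum_range_succ, hlead, one_smul,
      Finset.sum_range]
  have last_row :
      ∑ i : Fin (m + 1), a.charpoly.coeff i • Pi.single i.rev 1 + a.row 0 = 0 := by
    simpa only [vecMul_add, vecMul_sum, vecMul_smul, ha.single_last_vecMul_pow,
      ha.single_last_vecMul_pow_succ, vecMul_zero] using
      congrArg (Pi.single (Fin.last m) 1 ᵥ* ·) cayley_hamilton
  have at_entry := congrFun last_row j
  rw [← Equiv.sum_comp Fin.revPerm] at at_entry
  simp only [Fin.revPerm_apply, Fin.rev_rev, Pi.add_apply, Finset.sum_apply, Pi.smul_apply,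
    Pi.single_apply, smul_eq_mul, mul_ite, mul_one, mul_zero, Finset.sum_ite_eq, Finset.mem_univ,
    ↓reduceIte, row_apply, Pi.zero_apply] at at_entry
  exact eq_neg_of_add_eq_zero_right at_entry

theorem eq_of_charpoly_eq (ha : IsCompanionForm a) (hb : IsCompanionForm b)
    (h : a.charpoly = b.charpoly) : a = b := by
  refine ext_row fun i => ?_
  cases i using Fin.cases with
  | zero =>
    funext j
    rw [row_apply, row_apply, ha.apply_zero_eq_neg_charpoly_coeff,
      hb.apply_zero_eq_neg_charpoly_coeff, h]
  | succ i => rw [ha i, hb i]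

theorem det_eq (ha : IsCompanionForm a) : a.det = (-1) ^ m * a 0 (Fin.last m) := by
  rw [ha.apply_zero_eq_neg_charpoly_coeff, det_eq_sign_charpoly_coeff, Fintype.card_fin,
    Fin.rev_last, Fin.val_zero]
  ring

end IsCompanionForm

theorem isCompanionForm_iff_apply {a : Matrix (Fin (m + 1)) (Fin (m + 1)) R} :
    IsCompanionForm a ↔
      (∀ i j : Fin (m + 1), (i : ℕ) = (j : ℕ) + 1 → a i j = 1) ∧
      (∀ i j : Fin (m + 1), (i : ℕ) ≠ 0 → (i : ℕ) ≠ (j : ℕ) + 1 → a i j = 0) := by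
  have entrywise : IsCompanionForm a ↔
      ∀ (i : Fin m) (j : Fin (m + 1)), a i.succ j = if (j : ℕ) = i then 1 else 0 := by
    simp only [IsCompanionForm, funext_iff, row_apply, Pi.single_apply, Fin.ext_iff,
      Fin.val_castSucc]
  rw [entrywise]
  constructor
  · intro h
    constructor <;> intro i j <;> cases i using Fin.cases with
    | zero => simp
    | succ i =>
      rw [h, Fin.val_succ]
      grind
  · rintro ⟨subdiagonal, elsewhere⟩ i j
    split_ifs with hij
    · exact subdiagonal _ _ (by rw [Fin.val_succ, hij])
    · exact elsewhere _ _ (by simp) (by rw [Fin.val_succ]; omega)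

theorem isSteinbergA_iff {a : Matrix (Fin (m + 1)) (Fin (m + 1)) R} :
    IsSteinbergA a ↔ IsCompanionForm a ∧ a.det = 1 := by
  rw [IsSteinbergA, ← isCompanionForm_iff_apply, and_comm]
  refine and_congr_right fun ha => ?_
  have corner : a.det = 1 ↔ a 0 (Fin.last m) = (-1) ^ m := by
    have neg_one_sq : (-1 : R) ^ m * (-1) ^ m = 1 := by
      rw [← mul_pow, neg_one_mul, neg_neg, one_pow]
    rw [ha.det_eq]
    constructor <;> intro h
    · linear_combination (-1) ^ m * h - a 0 (Fin.last m) * neg_one_sq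
    · rw [h, neg_one_sq]
  rw [corner]
  refine ⟨fun h => h 0 (Fin.last m) rfl rfl, fun h i j hi hj => ?_⟩
  obtain rfl : i = 0 := Fin.ext hi
  obtain rfl : j = Fin.last m := Fin.ext hj
  exact h

end CompanionForm

theorem charpoly_coe_conj {n R : Type*} [Fintype n] [DecidableEq n] [CommRing R]
    (h g : Matrix.SpecialLinearGroup n R) :
    ((h * g * h⁻¹ : Matrix.SpecialLinearGroup n R) : Matrix n n R).charpoly
      = (g : Matrix n n R).charpoly := by
  rw [Matrix.SpecialLinearGroup.coe_mul, Matrix.charpoly_mul_comm,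
    ← Matrix.SpecialLinearGroup.coe_mul, inv_mul_cancel_left]

theorem exists_isSteinbergA_conj {m : ℕ} {K : Type*} [Field K]
    (hroot : ∀ x : K, ∃ y, y ^ (m + 1) = x) (g : Matrix.SpecialLinearGroup (Fin (m + 1)) K)
    (hreg : (minpoly K (g : Matrix (Fin (m + 1)) (Fin (m + 1)) K)).natDegree = m + 1) :
    ∃ h : Matrix.SpecialLinearGroup (Fin (m + 1)) K,
      IsSteinbergA ((h * g * h⁻¹ : Matrix.SpecialLinearGroup (Fin (m + 1)) K) :
        Matrix (Fin (m + 1)) (Fin (m + 1)) K) := by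
  obtain ⟨w, hw⟩ := exists_det_krylovMatrix_eq_one hroot hreg
  refine ⟨⟨krylovMatrix w g, hw⟩, isSteinbergA_iff.2 ⟨?_, Matrix.SpecialLinearGroup.det_coe _⟩⟩
  have hconj := isCompanionForm_krylovMatrix_conj (hw ▸ isUnit_one)
  rwa [Matrix.inv_def, hw, Ring.inverse_one, one_smul] at hconj

theorem stmt_2_general {K : Type*} [Field K] (n : ℕ) (hroot : ∀ x : K, ∃ y, y ^ n = x)
    (g : Matrix.SpecialLinearGroup (Fin n) K)
    (hreg : (minpoly K (g : Matrix (Fin n) (Fin n) K)).natDegree = n) :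
    ∃! a : Matrix (Fin n) (Fin n) K, IsSteinbergA a ∧
      ∃ h : Matrix.SpecialLinearGroup (Fin n) K,
        ((h * g * h⁻¹ : Matrix.SpecialLinearGroup (Fin n) K) : Matrix (Fin n) (Fin n) K) = a := by
  obtain _ | m := n
  · obtain ⟨y, hy⟩ := hroot 0
    exact absurd hy (by rw [pow_zero]; exact one_ne_zero)
  obtain ⟨h, hh⟩ := exists_isSteinbergA_conj hroot g hreg
  refine ⟨_, ⟨hh, h, rfl⟩, ?_⟩
  rintro _ ⟨hk, k, rfl⟩
  refine (isSteinbergA_iff.1 hk).1.eq_of_charpoly_eq (isSteinbergA_iff.1 hh).1 ?_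
  rw [charpoly_coe_conj, charpoly_coe_conj]

/-- Every regular element `g` of `SL(n, ℂ)` (one whose minimal polynomial has
degree `n`) is conjugate under `SL(n, ℂ)` to exactly one element of `A(ℂ)`: Steinberg's
cross-section theorem for `SL(n)`. -/
theorem stmt_2 (n : ℕ) (hn : 2 ≤ n) (g : Matrix.SpecialLinearGroup (Fin n) ℂ)
    (hreg : (minpoly ℂ (g : Matrix (Fin n) (Fin n) ℂ)).natDegree = n) :
    ∃! a : Matrix (Fin n) (Fin n) ℂ, IsSteinbergA a ∧
      ∃ h : Matrix.SpecialLinearGroup (Fin n) ℂ,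
        ((h * g * h⁻¹ : Matrix.SpecialLinearGroup (Fin n) ℂ) : Matrix (Fin n) (Fin n) ℂ) = a := by
  exact stmt_2_general n (fun x => IsAlgClosed.exists_pow_nat_eq x (by omega)) g hreg
end

section
/- Let R be a commutative ring and a ∈ A(R). For 1 ≤ i ≤ n−1 and k ≥ 0 let θ_{i,k} ∈ R denote the determinant of the top-left i×i submatrix of the power a^k, and set by convention θ_{0,k} := 1 and θ_{n,k} := 1 (note also θ_{i,0} = 1). Then for all 1 ≤ i ≤ n−1 and all k ≥ 1 the Q-system relation holds: θ_{i,k}² = θ_{i,k−1}·θ_{i,k+1} + θ_{i−1,k}·θ_{i+1,k}. -/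
/-- `θ_{i,k}`: the determinant of the top-left `i × i` submatrix of `m ^ k`, with the
conventions `θ_{0,k} = 1` and `θ_{n,k} = 1`. -/
noncomputable def theta {n : ℕ} {R : Type*} [CommRing R]
    (m : Matrix (Fin n) (Fin n) R) (i k : ℕ) : R :=
  if i = 0 ∨ i = n then 1
  else if h : i ≤ n then ((m ^ k).submatrix (Fin.castLE h) (Fin.castLE h)).det
  else 0

/-!
For a companion-type matrix `a` (unit subdiagonal, arbitrary first row), left multiplication by `a`
shifts rows down by one, and right multiplication by `a` shifts columns left by one up to multiples
of the zeroth column. Hence the determinant with columns `M e₀, M a e₀, …, M a e_{i-1}`, cut off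
after `i + 1` rows, is the leading minor of `M` of order `i + 1`. Applying the Desnanot–Jacobi
identity to this matrix with `a ^ k` in place of `M`, the six minors that occur are leading minors
of `a ^ (k - 1)`, `a ^ k` and `a ^ (k + 1)`.
-/

open Matrix

section Jacobi

variable {m n R : Type*} [Fintype m] [DecidableEq m] [Fintype n] [DecidableEq n] [CommRing R]

lemma det_mul_det_toBlocks₂₂_adjugate (M : Matrix (m ⊕ n) (m ⊕ n) R) :
    M.det * M.adjugate.toBlocks₂₂.det = M.det ^ Fintype.card n * M.toBlocks₁₁.det := by
  have mul_adjugate_blocks : fromBlocks M.toBlocks₁₁ M.toBlocks₁₂ M.toBlocks₂₁ M.toBlocks₂₂ *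
      fromBlocks M.adjugate.toBlocks₁₁ M.adjugate.toBlocks₁₂ M.adjugate.toBlocks₂₁
        M.adjugate.toBlocks₂₂ = fromBlocks (M.det • 1) 0 0 (M.det • 1) := by
    rw [fromBlocks_toBlocks, fromBlocks_toBlocks, mul_adjugate, ← fromBlocks_one, fromBlocks_smul,
      smul_zero, smul_zero]
  rw [fromBlocks_multiply] at mul_adjugate_blocks
  obtain ⟨-, upper_right, -, lower_right⟩ := fromBlocks_inj.mp mul_adjugate_blocks
  have factorization : M * fromBlocks 1 M.adjugate.toBlocks₁₂ 0 M.adjugate.toBlocks₂₂ =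
      fromBlocks M.toBlocks₁₁ 0 M.toBlocks₂₁ (M.det • 1) := by
    conv_lhs => rw [← fromBlocks_toBlocks M]
    rw [fromBlocks_multiply]
    simp only [fromBlocks_toBlocks, upper_right, lower_right, Matrix.mul_one, Matrix.mul_zero,
      add_zero]
  simpa only [det_mul, det_fromBlocks_zero₂₁, det_fromBlocks_zero₁₂, det_one, one_mul, det_smul,
    mul_one, mul_comm] using congrArg det factorization

theorem det_toBlocks₂₂_adjugate [Nonempty n] (M : Matrix (m ⊕ n) (m ⊕ n) R) :
    M.adjugate.toBlocks₂₂.det = M.det ^ (Fintype.card n - 1) * M.toBlocks₁₁.det := by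
  -- `det M` may be a zero divisor, so cancel it for the matrix of indeterminates and specialize.
  let X := mvPolynomialX (m ⊕ n) (m ⊕ n) ℤ
  let specialize := MvPolynomial.aeval (R := ℤ) fun p : (m ⊕ n) × (m ⊕ n) ↦ M p.1 p.2
  have generic : X.adjugate.toBlocks₂₂.det = X.det ^ (Fintype.card n - 1) * X.toBlocks₁₁.det := by
    apply mul_left_cancel₀ (det_mvPolynomialX_ne_zero (m ⊕ n) ℤ)
    rw [det_mul_det_toBlocks₂₂_adjugate, ← mul_assoc, mul_pow_sub_one Fintype.card_ne_zero]
  have map_X : specialize.mapMatrix X = M := mvPolynomialX_mapMatrix_aeval ℤ M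
  have map_block₂₂ : specialize.mapMatrix X.adjugate.toBlocks₂₂ = M.adjugate.toBlocks₂₂ :=
    congrArg toBlocks₂₂ ((specialize.map_adjugate X).trans (congrArg adjugate map_X))
  have map_block₁₁ : specialize.mapMatrix X.toBlocks₁₁ = M.toBlocks₁₁ :=
    congrArg toBlocks₁₁ map_X
  rw [← map_block₂₂, ← map_block₁₁, ← AlgHom.map_det, ← AlgHom.map_det, generic, map_mul, map_pow,
    AlgHom.map_det, map_X]

end Jacobi

section LeadingMinor

variable {n : ℕ} {R : Type*} [CommRing R]

theorem desnanot_jacobi (M : Matrix (Fin (n + 2)) (Fin (n + 2)) R) :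
    M.det * (M.submatrix (Fin.succ ∘ Fin.castSucc) (Fin.succ ∘ Fin.castSucc)).det =
      (M.submatrix Fin.castSucc Fin.castSucc).det * (M.submatrix Fin.succ Fin.succ).det -
        (M.submatrix Fin.castSucc Fin.succ).det * (M.submatrix Fin.succ Fin.castSucc).det := by
  let e : Fin n ⊕ Fin 2 ≃ Fin (n + 2) := finSumFinEquiv.trans (finRotate (n + 2))
  have e_inl : e ∘ Sum.inl = Fin.succ ∘ Fin.castSucc :=
    funext fun j ↦ finRotate_of_lt (Nat.lt_succ_of_lt j.isLt)
  have e_last : e (Sum.inr 0) = Fin.last (n + 1) := finRotate_of_lt n.lt_succ_self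
  have e_first : e (Sum.inr 1) = 0 := finRotate_last
  have jacobi := det_toBlocks₂₂_adjugate (M.submatrix e e)
  have interior : (M.submatrix e e).toBlocks₁₁ =
      M.submatrix (Fin.succ ∘ Fin.castSucc) (Fin.succ ∘ Fin.castSucc) := by
    rw [← e_inl]
    rfl
  have sign_sq : ((-1 : R) ^ (n + 1)) * (-1) ^ (n + 1) = 1 := by
    rw [← mul_pow, neg_one_mul, neg_neg, one_pow]
  rw [interior, det_submatrix_equiv_self, adjugate_submatrix_equiv_self, det_fin_two,
    Fintype.card_fin, pow_one] at jacobi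
  simp only [toBlocks₂₂, of_apply, submatrix_apply, e_first, e_last,
    adjugate_fin_succ_eq_det_submatrix, Fin.val_last, Fin.val_zero, Fin.succAbove_last,
    Fin.succAbove_zero, Even.add_self, Even.neg_pow, one_pow, pow_zero, add_zero, zero_add,
    one_mul] at jacobi
  linear_combination -jacobi - (M.submatrix Fin.castSucc Fin.succ).det *
    (M.submatrix Fin.succ Fin.castSucc).det * sign_sq

/-- The leading principal minor of order `i`: the determinant of the top-left `i × i` block. -/
def leadingMinor (M : Matrix (Fin n) (Fin n) R) (i : ℕ) (hi : i ≤ n) : R :=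
  (M.submatrix (Fin.castLE hi) (Fin.castLE hi)).det

/-- Companion-type matrices: arbitrary first row, `1` on the subdiagonal, `0` elsewhere. Unlike for
`IsSteinbergA`, the corner entry is free, so the determinant need not be `1`. -/
def IsTopCompanion (a : Matrix (Fin (n + 1)) (Fin (n + 1)) R) : Prop :=
  ∀ (r : Fin n) (c : Fin (n + 1)), a r.succ c = if c = r.castSucc then 1 else 0

/-- The top `i + 1` entries of the columns `M e₀, M b e₀, M b e₁, …, M b e_{i-1}`. For `b` of
companion type this is the top-left block of `M` up to column operations. -/
def borderedBlock (M b : Matrix (Fin (n + 1)) (Fin (n + 1)) R) (i : ℕ) (hi : i ≤ n) :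
    Matrix (Fin (i + 1)) (Fin (i + 1)) R :=
  of fun r ↦ Fin.cons (M (r.castLE (by omega)) 0) fun c : Fin i ↦
    (M * b) (r.castLE (by omega)) (c.castLE (by omega))

namespace IsTopCompanion

variable {a b : Matrix (Fin (n + 1)) (Fin (n + 1)) R}

lemma mul_apply_succ (ha : IsTopCompanion a) (M : Matrix (Fin (n + 1)) (Fin (n + 1)) R)
    (r : Fin n) (c : Fin (n + 1)) : (a * M) r.succ c = M r.castSucc c := by
  simp [mul_apply, ha r]

lemma mul_apply_castSucc (hb : IsTopCompanion b) (M : Matrix (Fin (n + 1)) (Fin (n + 1)) R)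
    (r : Fin (n + 1)) (c : Fin n) :
    (M * b) r c.castSucc = M r c.succ + b 0 c.castSucc * M r 0 := by
  simp only [mul_apply, Fin.sum_univ_succ, hb _ c.castSucc, Fin.castSucc_inj, mul_ite, mul_one,
    mul_zero, Finset.sum_ite_eq, Finset.mem_univ, ↓reduceIte]
  ring

lemma det_eq (ha : IsTopCompanion a) : a.det = (-1) ^ n * a 0 (Fin.last n) := by
  have minor_eq_one : a.submatrix (Fin.succAbove 0) (Fin.last n).succAbove = 1 := by
    ext r c
    simp [ha r, one_apply, eq_comm]
  rw [det_succ_column a (Fin.last n), Fintype.sum_eq_single 0, minor_eq_one]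
  · simp
  · intro r hr
    obtain ⟨r, rfl⟩ := Fin.exists_succ_eq.mpr hr
    simp [ha r, (Fin.castSucc_lt_last r).ne']

lemma det_borderedBlock (hb : IsTopCompanion b) (M : Matrix (Fin (n + 1)) (Fin (n + 1)) R)
    {i : ℕ} (hi : i ≤ n) : (borderedBlock M b i hi).det = leadingMinor M (i + 1) (by omega) := by
  rw [leadingMinor, ← det_transpose, ← det_transpose (M.submatrix _ _)]
  refine det_eq_of_forall_row_eq_smul_add_const
    (Fin.cons 0 fun c : Fin i ↦ b 0 (c.castLE (by omega))) 0 rfl fun c r ↦ ?_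
  cases c using Fin.cases with
  | zero => simp [borderedBlock]
  | succ c => exact hb.mul_apply_castSucc M _ (c.castLE hi)

theorem leadingMinor_mul_leadingMinor (ha : IsTopCompanion a) (hb : IsTopCompanion b)
    (M : Matrix (Fin (n + 1)) (Fin (n + 1)) R) {i : ℕ} (hi : i + 1 ≤ n) :
    leadingMinor (a * M) (i + 1) (by omega) * leadingMinor (M * b) (i + 1) (by omega) =
      leadingMinor M (i + 1) (by omega) * leadingMinor (a * M * b) (i + 1) (by omega) +
        leadingMinor (M * b) i (by omega) * leadingMinor (a * M) (i + 2) (by omega) := by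
  let B := borderedBlock (a * M) b (i + 1) hi
  have row_shift (N : Matrix (Fin (n + 1)) (Fin (n + 1)) R) (r : Fin (i + 1)) (c : Fin (n + 1)) :
      (a * N) (r.succ.castLE (by omega)) c = N (r.castLE (by omega)) c :=
    ha.mul_apply_succ N (r.castLE hi) c
  have top_left : B.submatrix Fin.castSucc Fin.castSucc =
      borderedBlock (a * M) b i (by omega) := by
    ext r c
    cases c using Fin.cases <;> rfl
  have bottom_left : B.submatrix Fin.succ Fin.castSucc = borderedBlock M b i (by omega) := by
    ext r c
    cases c using Fin.cases with
    | zero => exact row_shift M r 0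
    | succ c => exact (congrFun₂ (Matrix.mul_assoc a M b) _ _).trans (row_shift (M * b) r _)
  have bottom_right_block : B.submatrix Fin.succ Fin.succ =
      (M * b).submatrix (Fin.castLE (by omega)) (Fin.castLE (by omega)) := by
    ext r c
    exact (congrFun₂ (Matrix.mul_assoc a M b) _ _).trans (row_shift (M * b) r _)
  have bottom_right : (B.submatrix Fin.succ Fin.succ).det =
      leadingMinor (M * b) (i + 1) (by omega) := congrArg det bottom_right_block
  have top_right : (B.submatrix Fin.castSucc Fin.succ).det =
      leadingMinor (a * M * b) (i + 1) (by omega) := rfl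
  have interior : (B.submatrix (Fin.succ ∘ Fin.castSucc) (Fin.succ ∘ Fin.castSucc)).det =
      leadingMinor (M * b) i (by omega) :=
    congrArg (fun N ↦ (N.submatrix Fin.castSucc Fin.castSucc).det) bottom_right_block
  have dodgson := desnanot_jacobi B
  rw [top_left, bottom_left, top_right, bottom_right, interior, hb.det_borderedBlock,
    hb.det_borderedBlock, hb.det_borderedBlock] at dodgson
  linear_combination -dodgson

end IsTopCompanion

namespace IsSteinbergA

variable {a : Matrix (Fin (n + 1)) (Fin (n + 1)) R}

lemma isTopCompanion (ha : IsSteinbergA a) : IsTopCompanion a := by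
  intro r c
  split_ifs with h
  · exact ha.2.1 _ _ (by simp [h])
  · exact ha.2.2 _ _ (by simp) fun h_val ↦ h (Fin.ext (by simpa using h_val.symm))

lemma det_eq_one (ha : IsSteinbergA a) : a.det = 1 := by
  rw [ha.isTopCompanion.det_eq, ha.1 0 (Fin.last n) rfl (by simp), Nat.add_sub_cancel, ← mul_pow,
    neg_one_mul, neg_neg, one_pow]

lemma theta_eq_leadingMinor (ha : IsSteinbergA a) (k : ℕ) {i : ℕ} (hi : i ≤ n + 1) :
    theta a i k = leadingMinor (a ^ k) i hi := by
  unfold theta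
  split_ifs with h
  · rcases h with rfl | rfl
    · exact det_isEmpty.symm
    · exact (show (a ^ k).det = 1 by rw [det_pow, ha.det_eq_one, one_pow]).symm
  · rfl

end IsSteinbergA

theorem stmt_4_general {a : Matrix (Fin (n + 1)) (Fin (n + 1)) R} (ha : IsTopCompanion a)
    {i k : ℕ} (hi1 : 1 ≤ i) (hi2 : i ≤ n) (hk : 1 ≤ k) :
    leadingMinor (a ^ k) i (by omega) ^ 2 =
      leadingMinor (a ^ (k - 1)) i (by omega) * leadingMinor (a ^ (k + 1)) i (by omega) +
        leadingMinor (a ^ k) (i - 1) (by omega) * leadingMinor (a ^ k) (i + 1) (by omega) := by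
  obtain ⟨i, rfl⟩ := Nat.exists_eq_add_of_le' hi1
  obtain ⟨k, rfl⟩ := Nat.exists_eq_add_of_le' hk
  simpa only [← pow_succ, ← pow_succ', ← sq, Nat.add_sub_cancel] using
    ha.leadingMinor_mul_leadingMinor ha (a ^ k) hi2

end LeadingMinor

/-- for `a ∈ A(R)`, `1 ≤ i ≤ n−1` and `k ≥ 1`, the Q-system relation
`θ_{i,k}² = θ_{i,k−1}·θ_{i,k+1} + θ_{i−1,k}·θ_{i+1,k}` holds. -/
theorem stmt_4 (n : ℕ) (hn : 2 ≤ n) (R : Type*) [CommRing R]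
    (a : Matrix (Fin n) (Fin n) R) (ha : IsSteinbergA a)
    (i k : ℕ) (hi1 : 1 ≤ i) (hi2 : i ≤ n - 1) (hk : 1 ≤ k) :
    theta a i k ^ 2 =
      theta a i (k - 1) * theta a i (k + 1) + theta a (i - 1) k * theta a (i + 1) k := by
  obtain ⟨n, rfl⟩ := Nat.exists_eq_add_of_le' (Nat.one_le_of_lt hn)
  have theta_eq (k : ℕ) {j : ℕ} (hj : j ≤ n + 1) := ha.theta_eq_leadingMinor k hj
  simpa only [theta_eq _ (show i ≤ n + 1 by omega), theta_eq _ (show i - 1 ≤ n + 1 by omega),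
    theta_eq _ (show i + 1 ≤ n + 1 by omega)] using stmt_4_general ha.isTopCompanion hi1 hi2 hk
end

section
/- Let R be a commutative ring and let g : ℤ → SL(n, R) be an (SL(n), c)-band over R. For s ∈ ℤ, 1 ≤ i ≤ n−1 and k ≥ 0, let θ^{(s)}_{i,k} ∈ R denote the determinant of the top-left i×i submatrix of g(s)·g(s+k)⁻¹, and set by convention θ^{(s)}_{0,k} := 1 and θ^{(s)}_{n,k} := 1 (note θ^{(s)}_{i,0} = 1). Then for all s ∈ ℤ, 1 ≤ i ≤ n−1 and k ≥ 1 the T-system relation holds: θ^{(s)}_{i,k}·θ^{(s+1)}_{i,k} = θ^{(s)}_{i,k+1}·θ^{(s+1)}_{i,k−1} + θ^{(s+1)}_{i−1,k}·θ^{(s)}_{i+1,k}. -/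
/-- `θ^{(s)}_{i,k}`: the determinant of the top-left `i × i` submatrix of
`g(s)·g(s+k)⁻¹`, with the conventions `θ^{(s)}_{0,k} = 1` and `θ^{(s)}_{n,k} = 1`. -/
noncomputable def thetaBand {n : ℕ} {R : Type*} [CommRing R]
    (g : ℤ → Matrix.SpecialLinearGroup (Fin n) R) (s : ℤ) (i k : ℕ) : R :=
  if i = 0 ∨ i = n then 1
  else if h : i ≤ n then
    (((g s * (g (s + (k : ℤ)))⁻¹ : Matrix.SpecialLinearGroup (Fin n) R) :
        Matrix (Fin n) (Fin n) R).submatrix (Fin.castLE h) (Fin.castLE h)).det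
  else 0

/-! A band is determined by the sequence `v t` of first rows of `g t`: the subdiagonal ones of
`g s * (g (s + 1))⁻¹` shift the rows, so that row `j` of `g s` is `v (s + j)`. Since `det (g t)`
equals `1`, the leading `i × i` minor of `g s * (g t)⁻¹` is the determinant with rows
`v s, …, v (s + i - 1), v (t + i), …, v (t + n - 1)`. For `t = s + k`, the six determinants in the
T-system relation share `n - 2` of these vectors, and the relation is the three-term Plücker
relation for the remaining `v s`, `v (s + i)`, `v (t + i)`, `v (t + n)`. -/

open Matrix

section Determinants

variable {ι R : Type*} [Fintype ι] [DecidableEq ι] [CommRing R]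

theorem det_smul_eq_sum_det_updateRow_smul (M : Matrix ι ι R) (c : ι → R) :
    M.det • c = ∑ j, (M.updateRow j c).det • M j := by
  rw [← det_transpose M, ← mulVec_cramer, mulVec_transpose, vecMul_eq_sum]
  simp only [cramer_transpose_apply]

theorem det_mul_det_eq_sum_exchange_row (M N : Matrix ι ι R) (i : ι) :
    M.det * N.det = ∑ j, (M.updateRow j (N i)).det * (N.updateRow i (M j)).det := by
  have expansion := congrArg (fun v ↦ cramer Nᵀ v i) (det_smul_eq_sum_det_updateRow_smul M (N i))
  simp only [map_smul, map_sum, Finset.sum_apply, Pi.smul_apply, smul_eq_mul] at expansion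
  simpa only [cramer_transpose_apply, updateRow_eq_self] using expansion

theorem det_piecewise_row_mul (T C : Matrix ι ι R) (p : ι → Prop) [DecidablePred p] :
    (of fun j ↦ if p j then (T * C) j else C j).det = (T.toSquareBlockProp p).det * C.det := by
  set N : Matrix ι ι R := of fun j ↦ if p j then T j else (1 : Matrix ι ι R) j with hN
  have factor : (of fun j ↦ if p j then (T * C) j else C j) = N * C := by
    ext j l
    by_cases hj : p j
    · simp [hN, hj, Matrix.mul_apply]
    · simp [hN, hj, Matrix.mul_apply, Matrix.one_apply]
  have upper_block : N.toSquareBlockProp p = T.toSquareBlockProp p := by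
    ext ⟨j, hj⟩ l
    simp [hN, toSquareBlockProp, hj]
  have lower_block : N.toSquareBlockProp (fun j ↦ ¬ p j) = 1 := by
    ext ⟨j, hj⟩ ⟨l, hl⟩
    simp [hN, toSquareBlockProp, hj, Matrix.one_apply]
  have lower_left : ∀ j, ¬ p j → ∀ l, p l → N j l = 0 := by
    intro j hj l hl
    have hjl : j ≠ l := fun h ↦ hj (h ▸ hl)
    simp [hN, hj, hjl]
  rw [factor, det_mul, twoBlockTriangular_det N p lower_left, upper_block, lower_block, det_one,
    mul_one]

theorem det_submatrix_castLE {n i : ℕ} (T : Matrix (Fin n) (Fin n) R) (h : i ≤ n) :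
    (T.submatrix (Fin.castLE h) (Fin.castLE h)).det =
      (T.toSquareBlockProp fun j ↦ (j : ℕ) < i).det := by
  rw [← det_submatrix_equiv_self (Fin.castLEquiv h)]
  rfl

end Determinants

theorem alternatingMap_map_insertNth_insertNth {R M N : Type*} [CommRing R] [AddCommGroup M]
    [AddCommGroup N] [Module R M] [Module R N] {m : ℕ} (f : M [⋀^Fin (m + 2)]→ₗ[R] N)
    (p : Fin (m + 2)) (q : Fin (m + 1)) (x y : M) (w : Fin m → M) :
    f (p.insertNth x (q.insertNth y w)) =
      (-1) ^ (p + q : ℕ) • f (vecCons x (vecCons y w)) := by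
  rw [f.map_insertNth, ← f.curryLeft_apply_apply, AlternatingMap.map_insertNth,
    f.curryLeft_apply_apply, smul_smul, pow_add]

theorem det_three_term_plucker {R : Type*} [CommRing R] {m : ℕ} (a b c d : Fin (m + 2) → R)
    (w : Fin m → Fin (m + 2) → R) :
    (of (vecCons a (vecCons c w))).det * (of (vecCons b (vecCons d w))).det =
      (of (vecCons a (vecCons d w))).det * (of (vecCons b (vecCons c w))).det +
        (of (vecCons c (vecCons d w))).det * (of (vecCons a (vecCons b w))).det := by
  have row_of (v : Fin (m + 2) → Fin (m + 2) → R) (j : Fin (m + 2)) : of v j = v j := rfl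
  have updateRow_fst (u x : Fin (m + 2) → R) (v : Fin (m + 1) → Fin (m + 2) → R) :
      (of (vecCons u v)).updateRow 0 x = of (vecCons x v) :=
    Fin.update_cons_zero (α := fun _ ↦ Fin (m + 2) → R) u v x
  have updateRow_snd (u v x : Fin (m + 2) → R) :
      (of (vecCons u (vecCons v w))).updateRow (Fin.succ 0) x = of (vecCons u (vecCons x w)) := by
    refine (Fin.cons_update (α := fun _ ↦ Fin (m + 2) → R) u (vecCons v w) 0 x).symm.trans ?_
    exact congrArg (vecCons u) (Fin.update_cons_zero (α := fun _ ↦ Fin (m + 2) → R) v w x)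
  have repeated_row (j : Fin m) : (of (vecCons (w j) (vecCons d w))).det = 0 :=
    det_zero_of_row_eq (i := 0) (j := j.succ.succ) (Fin.succ_ne_zero _).symm rfl
  rw [det_mul_det_eq_sum_exchange_row _ _ 0, Fin.sum_univ_succ, Fin.sum_univ_succ]
  simp only [updateRow_fst, updateRow_snd, row_of, cons_val_zero, cons_val_succ, repeated_row,
    mul_zero, Finset.sum_const_zero, add_zero]
  ring

theorem det_insertNth_three_term {R : Type*} [CommRing R] {m : ℕ} (p : Fin (m + 1))
    (a b c d : Fin (m + 2) → R) (w : Fin m → Fin (m + 2) → R) :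
    (of ((0 : Fin (m + 2)).insertNth a (p.insertNth c w))).det *
        (of (p.castSucc.insertNth b ((Fin.last m).insertNth d w))).det =
      (of ((0 : Fin (m + 2)).insertNth a ((Fin.last m).insertNth d w))).det *
          (of (p.castSucc.insertNth b (p.insertNth c w))).det +
        (of (p.castSucc.insertNth c ((Fin.last m).insertNth d w))).det *
          (of ((0 : Fin (m + 2)).insertNth a (p.insertNth b w))).det := by
  have move_rows (q : Fin (m + 2)) (r : Fin (m + 1)) (x y : Fin (m + 2) → R) :
      (of (q.insertNth x (r.insertNth y w))).det =
        (-1) ^ (q + r : ℕ) * (of (vecCons x (vecCons y w))).det := by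
    refine (alternatingMap_map_insertNth_insertNth detRowAlternating q r x y w).trans ?_
    rw [zsmul_eq_mul]
    push_cast
    rfl
  -- All three products carry the same sign `(-1) ^ m * (-1) ^ (2 * p)`.
  simp only [move_rows, Fin.val_zero, Fin.val_castSucc, Fin.val_last, zero_add, pow_add]
  linear_combination (-1) ^ m * ((-1) ^ (p : ℕ)) ^ 2 * det_three_term_plucker a b c d w

section Splice

variable {α : Type*} {n : ℕ}

/-- The tuple of length `n` formed by the first `i` terms of the window of `x` starting at `s`,
followed by the terms at positions `i, …, n - 1` of the window starting at `t`. -/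
def splice (x : ℤ → α) (s t : ℤ) (i : ℕ) (j : Fin n) : α :=
  if (j : ℕ) < i then x (s + j) else x (t + j)

theorem splice_succ_eq_insertNth_zero (x : ℤ → α) (s t : ℤ) (i : ℕ) :
    (splice x s t (i + 1) : Fin (n + 1) → α) =
      (0 : Fin (n + 1)).insertNth (x s) (splice x (s + 1) (t + 1) i) := by
  rw [Fin.eq_insertNth_iff]
  refine ⟨by simp [splice], ?_⟩
  ext j
  simp [splice, Fin.removeNth, add_assoc, add_comm (1 : ℤ)]

theorem splice_eq_insertNth_last (x : ℤ → α) (s t : ℤ) {i : ℕ} (hi : i ≤ n) :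
    (splice x s t i : Fin (n + 1) → α) =
      (Fin.last n).insertNth (x (t + n)) (splice x s t i) := by
  rw [Fin.eq_insertNth_iff]
  refine ⟨by simp [splice, hi], ?_⟩
  ext j
  simp [splice, Fin.removeNth]

theorem splice_succ_eq_insertNth (x : ℤ → α) (s t : ℤ) (p : Fin (n + 1)) :
    (splice x s t (p + 1) : Fin (n + 1) → α) =
      p.insertNth (x (s + p)) (splice x s (t + 1) p) := by
  rw [Fin.eq_insertNth_iff]
  refine ⟨by simp [splice], ?_⟩
  ext j
  simp only [splice, Fin.removeNth, Fin.succAbove]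
  grind

theorem splice_eq_insertNth (x : ℤ → α) (s t : ℤ) (p : Fin (n + 1)) :
    (splice x s t p : Fin (n + 1) → α) =
      p.insertNth (x (t + p)) (splice x s (t + 1) p) := by
  rw [Fin.eq_insertNth_iff]
  refine ⟨by simp [splice], ?_⟩
  ext j
  simp only [splice, Fin.removeNth, Fin.succAbove]
  grind

end Splice

theorem det_splice_three_term {R : Type*} [CommRing R] {m l : ℕ} (hl : l ≤ m)
    (x : ℤ → Fin (m + 2) → R) (s t : ℤ) :
    (of (splice x s t (l + 1))).det * (of (splice x (s + 1) (t + 1) (l + 1))).det =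
      (of (splice x s (t + 1) (l + 1))).det * (of (splice x (s + 1) t (l + 1))).det +
        (of (splice x (s + 1) (t + 1) l)).det * (of (splice x s t (l + 2))).det := by
  set w : Fin m → Fin (m + 2) → R := splice x (s + 1) (t + 1 + 1) l
  set p : Fin (m + 1) := ⟨l, Nat.lt_succ_of_le hl⟩
  have insert_c : splice x (s + 1) (t + 1) l = p.insertNth (x (t + 1 + l)) w :=
    splice_eq_insertNth x (s + 1) (t + 1) p
  have insert_b : splice x (s + 1) (t + 1) (l + 1) = p.insertNth (x (s + 1 + l)) w :=
    splice_succ_eq_insertNth x (s + 1) (t + 1) p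
  have insert_d : splice x (s + 1) (t + 1 + 1) l =
      (Fin.last m).insertNth (x (t + 1 + 1 + m)) w :=
    splice_eq_insertNth_last x (s + 1) (t + 1 + 1) hl
  have insert_c_d : splice x (s + 1) (t + 1) l =
      p.castSucc.insertNth (x (t + 1 + l)) (splice x (s + 1) (t + 1 + 1) l) :=
    splice_eq_insertNth x (s + 1) (t + 1) p.castSucc
  have insert_b_d : splice x (s + 1) (t + 1) (l + 1) =
      p.castSucc.insertNth (x (s + 1 + l)) (splice x (s + 1) (t + 1 + 1) l) :=
    splice_succ_eq_insertNth x (s + 1) (t + 1) p.castSucc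
  have insert_b_c : splice x (s + 1) t (l + 1) =
      p.castSucc.insertNth (x (s + 1 + l)) (splice x (s + 1) (t + 1) l) :=
    splice_succ_eq_insertNth x (s + 1) t p.castSucc
  rw [insert_b_d, insert_b_c, insert_c_d, splice_succ_eq_insertNth_zero x s t,
    splice_succ_eq_insertNth_zero x s (t + 1), splice_succ_eq_insertNth_zero x s t,
    insert_b, insert_c, insert_d]
  exact det_insertNth_three_term p _ _ _ _ w

/-- `(SL(n), c)`-bands for the standard Coxeter element `c`: sequences in `SL(n)` whose successive
quotients lie in Steinberg's cross-section. -/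
def IsCoxeterBand {n : ℕ} {R : Type*} [CommRing R]
    (g : ℤ → Matrix.SpecialLinearGroup (Fin n) R) : Prop :=
  ∀ s : ℤ, IsSteinbergA
    ((g s * (g (s + 1))⁻¹ : Matrix.SpecialLinearGroup (Fin n) R) : Matrix (Fin n) (Fin n) R)

/-- The sequence of first rows of a sequence in `SL(n)`, by which a band is determined. -/
def firstRow {n : ℕ} [NeZero n] {R : Type*} [CommRing R]
    (g : ℤ → Matrix.SpecialLinearGroup (Fin n) R) (t : ℤ) : Fin n → R :=
  (g t : Matrix (Fin n) (Fin n) R) 0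

section Band

variable {n : ℕ} {R : Type*} [CommRing R] {g : ℤ → Matrix.SpecialLinearGroup (Fin n) R}

theorem IsSteinbergA.mul_row_succ {A : Matrix (Fin n) (Fin n) R} (hA : IsSteinbergA A)
    (C : Matrix (Fin n) (Fin n) R) {j : ℕ} (hj : j + 1 < n) :
    (A * C) ⟨j + 1, hj⟩ = C ⟨j, Nat.lt_of_succ_lt hj⟩ := by
  obtain ⟨-, subdiagonal, otherwise_zero⟩ := hA
  have row_eq : A ⟨j + 1, hj⟩ = Pi.single ⟨j, by omega⟩ 1 := by
    ext l
    by_cases hl : l = ⟨j, by omega⟩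
    · simp [hl, subdiagonal]
    · rw [Pi.single_eq_of_ne hl]
      exact otherwise_zero _ _ (by simp) (by grind)
  rw [mul_apply_eq_vecMul, row_eq, single_one_vecMul]
  rfl

theorem IsCoxeterBand.row_eq_firstRow [NeZero n] (hg : IsCoxeterBand g) (s : ℤ) (j : Fin n) :
    (g s : Matrix (Fin n) (Fin n) R) j = firstRow g (s + j) := by
  obtain ⟨j, hj⟩ := j
  induction j generalizing s with
  | zero => simp [firstRow]
  | succ j ih =>
    have shift : (g s : Matrix (Fin n) (Fin n) R) ⟨j + 1, hj⟩ =
        (g (s + 1) : Matrix (Fin n) (Fin n) R) ⟨j, by omega⟩ := by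
      have row_mul := (hg s).mul_row_succ (g (s + 1) : Matrix (Fin n) (Fin n) R) hj
      rwa [← Matrix.SpecialLinearGroup.coe_mul, inv_mul_cancel_right] at row_mul
    rw [shift, ih]
    congr 1
    push_cast
    ring

theorem thetaBand_eq_det_submatrix (s : ℤ) {i : ℕ} (k : ℕ) (hi : i ≤ n) :
    thetaBand g s i k =
      (((g s * (g (s + k))⁻¹ : Matrix.SpecialLinearGroup (Fin n) R) :
        Matrix (Fin n) (Fin n) R).submatrix (Fin.castLE hi) (Fin.castLE hi)).det := by
  unfold thetaBand
  split_ifs with h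
  · rcases h with rfl | rfl
    · rw [det_fin_zero]
    · exact (Matrix.SpecialLinearGroup.det_coe (g s * (g (s + k))⁻¹)).symm
  · rfl

theorem IsCoxeterBand.thetaBand_eq_det_splice [NeZero n] (hg : IsCoxeterBand g) (s : ℤ) {i : ℕ}
    (k : ℕ) (hi : i ≤ n) :
    thetaBand g s i k = (of (splice (firstRow g) s (s + k) i)).det := by
  have minor_eq := det_piecewise_row_mul
    ((g s * (g (s + k))⁻¹ : Matrix.SpecialLinearGroup (Fin n) R) : Matrix (Fin n) (Fin n) R)
    (g (s + k) : Matrix (Fin n) (Fin n) R) (fun j ↦ (j : ℕ) < i)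
  rw [← Matrix.SpecialLinearGroup.coe_mul, inv_mul_cancel_right,
    Matrix.SpecialLinearGroup.det_coe, mul_one, ← det_submatrix_castLE _ hi,
    ← thetaBand_eq_det_submatrix] at minor_eq
  simp only [hg.row_eq_firstRow] at minor_eq
  exact minor_eq.symm

end Band

/-- for an `(SL(n), c)`-band `g` over `R`, all `s ∈ ℤ`, `1 ≤ i ≤ n−1` and `k ≥ 1`,
the T-system relation
`θ^{(s)}_{i,k}·θ^{(s+1)}_{i,k} = θ^{(s)}_{i,k+1}·θ^{(s+1)}_{i,k−1} + θ^{(s+1)}_{i−1,k}·θ^{(s)}_{i+1,k}`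
holds. -/
theorem stmt_5 (n : ℕ) (hn : 2 ≤ n) (R : Type*) [CommRing R]
    (g : ℤ → Matrix.SpecialLinearGroup (Fin n) R)
    (hg : ∀ s : ℤ, IsSteinbergA
      ((g s * (g (s + 1))⁻¹ : Matrix.SpecialLinearGroup (Fin n) R) : Matrix (Fin n) (Fin n) R))
    (s : ℤ) (i k : ℕ) (hi1 : 1 ≤ i) (hi2 : i ≤ n - 1) (hk : 1 ≤ k) :
    thetaBand g s i k * thetaBand g (s + 1) i k =
      thetaBand g s i (k + 1) * thetaBand g (s + 1) i (k - 1) +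
        thetaBand g (s + 1) (i - 1) k * thetaBand g s (i + 1) k := by
  obtain ⟨m, rfl⟩ : ∃ m, n = m + 2 := ⟨n - 2, by omega⟩
  obtain ⟨l, rfl⟩ : ∃ l, i = l + 1 := ⟨i - 1, by omega⟩
  obtain ⟨k, rfl⟩ : ∃ k', k = k' + 1 := ⟨k - 1, by omega⟩
  have theta_eq := IsCoxeterBand.thetaBand_eq_det_splice hg
  have shift_start : s + 1 + ((k + 1 : ℕ) : ℤ) = s + (k + 1 : ℕ) + 1 := by ring
  have shift_length : s + ((k + 1 + 1 : ℕ) : ℤ) = s + (k + 1 : ℕ) + 1 := by push_cast; ring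
  have shift_both : s + 1 + (k : ℤ) = s + (k + 1 : ℕ) := by push_cast; ring
  simp only [Nat.add_sub_cancel]
  iterate 6 rw [theta_eq _ _ (by omega)]
  rw [shift_start, shift_length, shift_both]
  exact det_splice_three_term (by omega) (firstRow g) s (s + (k + 1 : ℕ))
end

section
/- Let R be a commutative ring and g, h ∈ SL(n, R). Then g·h⁻¹ ∈ A(R) if and only if the last n−1 rows of g coincide with the first n−1 rows of h, i.e., g_{i+1,j} = h_{i,j} for all 1 ≤ i ≤ n−1 and 1 ≤ j ≤ n. -/
/-!
Put `m = g h⁻¹`, so that `g = m h`. The row of `g` with index `i + 1` equals the row of `h` with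
index `i` exactly when the row of `m` with index `i + 1` is the `i`-th standard basis row vector.
If this holds for all `i`, expanding along the last column gives that `det m` is `(-1)^(n-1)` times
the top right entry of `m`, so the value prescribed for that entry in `A(R)` amounts to `det m = 1`.
-/

section Row

open Matrix

variable {l n R : Type*} [Fintype n] [DecidableEq n] [Semiring R]

theorem row_mul_eq_row_iff {M : Matrix l n R} {A : Matrix n n R} (hA : IsRightRegular A)
    (i : l) (i' : n) : (M * A).row i = A.row i' ↔ M.row i = Pi.single i' 1 := by
  have row_mul_eq_vecMul : (M * A).row i = M.row i ᵥ* A := mul_apply_eq_vecMul M A i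
  rw [row_mul_eq_vecMul, ← single_one_vecMul i' A]
  exact (isRightRegular_iff_vecMul_injective.mp hA).eq_iff

end Row

section Det

variable {k : ℕ} {R : Type*} [CommRing R]

theorem det_eq_mul_det_submatrix_of_col_eq_single {M : Matrix (Fin (k + 1)) (Fin (k + 1)) R}
    {i j : Fin (k + 1)} {a : R} (hM : M.col j = Pi.single i a) :
    M.det = (-1) ^ (i + j : ℕ) * a * (M.submatrix i.succAbove j.succAbove).det := by
  have col_apply (r : Fin (k + 1)) : M r j = (Pi.single i a : Fin (k + 1) → R) r := congrFun hM r
  rw [Matrix.det_succ_column M j, Fintype.sum_eq_single i]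
  · rw [col_apply, Pi.single_eq_same]
  · intro r hr
    rw [col_apply, Pi.single_eq_of_ne hr, mul_zero, zero_mul]

theorem det_of_forall_row_succ_eq_single {M : Matrix (Fin (k + 1)) (Fin (k + 1)) R}
    (hM : ∀ i : Fin k, M.row i.succ = Pi.single i.castSucc 1) :
    M.det = (-1) ^ k * M 0 (Fin.last k) := by
  have apply_succ (i : Fin k) (j : Fin (k + 1)) :
      M i.succ j = (Pi.single i.castSucc 1 : Fin (k + 1) → R) j := congrFun (hM i) j
  have last_col : M.col (Fin.last k) = Pi.single 0 (M 0 (Fin.last k)) := by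
    ext i
    cases i using Fin.cases <;> simp [apply_succ]
  have minor : M.submatrix (Fin.succAbove 0) (Fin.last k).succAbove = 1 := by
    ext i j
    simp [apply_succ, Matrix.one_apply, Pi.single_apply, eq_comm]
  rw [det_eq_mul_det_submatrix_of_col_eq_single last_col, minor]
  simp

end Det

theorem forall_fin_val_eq_add_one_iff {k : ℕ} {p : Fin (k + 1) → Fin (k + 1) → Prop} :
    (∀ i i' : Fin (k + 1), (i' : ℕ) = i + 1 → p i i') ↔ ∀ i : Fin k, p i.castSucc i.succ := by
  refine ⟨fun h i ↦ h _ _ (by simp), fun h i i' hi ↦ ?_⟩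
  obtain ⟨r, rfl⟩ : ∃ r : Fin k, r.succ = i' :=
    Fin.exists_succ_eq.mpr (Fin.ne_of_val_ne (by simp [hi]))
  obtain rfl : r.castSucc = i := Fin.ext (by simpa using hi)
  exact h r

section SteinbergA

variable {k : ℕ} {R : Type*} [CommRing R] {M : Matrix (Fin (k + 1)) (Fin (k + 1)) R}

theorem isSteinbergA_iff_apply_zero_last_and_row_succ :
    IsSteinbergA M ↔ M 0 (Fin.last k) = (-1) ^ k ∧
      ∀ i : Fin k, M.row i.succ = Pi.single i.castSucc 1 := by
  simp only [funext_iff]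
  constructor
  · rintro ⟨corner, subdiagonal, zero⟩
    refine ⟨corner 0 (Fin.last k) rfl rfl, fun i j ↦ ?_⟩
    rcases eq_or_ne j i.castSucc with rfl | hj
    · simpa using subdiagonal i.succ i.castSucc rfl
    · rw [Pi.single_eq_of_ne hj]
      exact zero i.succ j (by simp) (by simpa [Fin.ext_iff, eq_comm] using hj)
  · rintro ⟨corner, rows⟩
    refine ⟨fun i j hi hj ↦ ?_, fun i j hij ↦ ?_, fun i j hi hij ↦ ?_⟩
    · obtain rfl : i = 0 := Fin.ext hi
      obtain rfl : j = Fin.last k := Fin.ext hj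
      exact corner
    · obtain ⟨r, rfl⟩ := Fin.exists_succ_eq.mpr (Fin.ne_of_val_ne (by simp [hij]) : i ≠ 0)
      obtain rfl : r.castSucc = j := Fin.ext (by simpa using hij)
      simpa using rows r r.castSucc
    · obtain ⟨r, rfl⟩ := Fin.exists_succ_eq.mpr (Fin.ne_of_val_ne hi : i ≠ 0)
      have hj : j ≠ r.castSucc := by simpa [Fin.ext_iff, eq_comm] using hij
      simpa [hj] using rows r j

theorem isSteinbergA_iff_det_and_row_succ :
    IsSteinbergA M ↔ M.det = 1 ∧ ∀ i : Fin k, M.row i.succ = Pi.single i.castSucc 1 := by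
  rw [isSteinbergA_iff_apply_zero_last_and_row_succ]
  refine and_congr_left fun rows ↦ ?_
  have sign_mul_sign : ((-1 : R) ^ k) * (-1) ^ k = 1 := by rw [← mul_pow]; simp
  calc M 0 (Fin.last k) = (-1) ^ k
      ↔ (-1) ^ k * M 0 (Fin.last k) = (-1) ^ k * (-1) ^ k :=
        (isUnit_neg_one.pow k).mul_right_inj.symm
    _ ↔ M.det = 1 := by rw [det_of_forall_row_succ_eq_single rows, sign_mul_sign]

end SteinbergA

theorem stmt_6_general {n : ℕ} {R : Type*} [CommRing R] (g h : Matrix (Fin n) (Fin n) R)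
    (hh : IsUnit h.det) :
    IsSteinbergA (g * h⁻¹) ↔
      g.det = h.det ∧ ∀ i i' j : Fin n, (i' : ℕ) = (i : ℕ) + 1 → g i' j = h i j := by
  obtain _ | k := n
  · simp [IsSteinbergA]
  obtain ⟨m, rfl⟩ : ∃ m, g = m * h := ⟨g * h⁻¹, (h.nonsing_inv_mul_cancel_right g hh).symm⟩
  have h_regular : IsRightRegular h := (h.isUnit_iff_isUnit_det.mpr hh).isRegular.right
  rw [h.mul_nonsing_inv_cancel_right m hh, isSteinbergA_iff_det_and_row_succ, Matrix.det_mul]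
  refine and_congr hh.mul_eq_right.symm ?_
  calc (∀ i : Fin k, m.row i.succ = Pi.single i.castSucc 1)
      ↔ ∀ i : Fin k, (m * h).row i.succ = h.row i.castSucc :=
        forall_congr' fun i ↦ (row_mul_eq_row_iff h_regular i.succ i.castSucc).symm
    _ ↔ ∀ i i' : Fin (k + 1), (i' : ℕ) = i + 1 → (m * h).row i' = h.row i :=
        (forall_fin_val_eq_add_one_iff (p := fun i i' ↦ (m * h).row i' = h.row i)).symm
    _ ↔ _ := ⟨fun rows i i' j hi ↦ congrFun (rows i i' hi) j,
        fun entries i i' hi ↦ funext fun j ↦ entries i i' j hi⟩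

/-- for `g, h ∈ SL(n, R)`, one has `g·h⁻¹ ∈ A(R)` if and only if the last `n−1`
rows of `g` coincide with the first `n−1` rows of `h`. -/
theorem stmt_6 (n : ℕ) (hn : 2 ≤ n) (R : Type*) [CommRing R]
    (g h : Matrix.SpecialLinearGroup (Fin n) R) :
    IsSteinbergA
      ((g * h⁻¹ : Matrix.SpecialLinearGroup (Fin n) R) : Matrix (Fin n) (Fin n) R) ↔
    ∀ i i' j : Fin n, (i' : ℕ) = (i : ℕ) + 1 →
      (g : Matrix (Fin n) (Fin n) R) i' j = (h : Matrix (Fin n) (Fin n) R) i j := by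
  simpa [Matrix.inv_def] using
    stmt_6_general (g : Matrix (Fin n) (Fin n) R) (h : Matrix (Fin n) (Fin n) R) (by simp)
end

section
/- Let R be a commutative ring. The multiplication map A(R) × U(R) → M(R), (a, u) ↦ a·u, is a bijection: every m ∈ M(R) factors uniquely as m = a·u with a ∈ A(R) and u ∈ U(R). -/
/-- Upper unitriangular `n × n` matrices: the group `U(R)`. -/
def IsUniUpper {n : ℕ} {R : Type*} [CommRing R] (u : Matrix (Fin n) (Fin n) R) : Prop :=
  (∀ i : Fin n, u i i = 1) ∧ ∀ i j : Fin n, (j : ℕ) < (i : ℕ) → u i j = 0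

/-- The `R`-points of the double coset `M = U·c̄·U` of `SL(n)`: determinant `1`, subdiagonal
entries `1`, and all entries below the subdiagonal `0`. -/
def IsSteinbergM {n : ℕ} {R : Type*} [CommRing R] (m : Matrix (Fin n) (Fin n) R) : Prop :=
  m.det = 1 ∧
  (∀ i j : Fin n, (i : ℕ) = (j : ℕ) + 1 → m i j = 1) ∧
  (∀ i j : Fin n, (j : ℕ) + 1 < (i : ℕ) → m i j = 0)

/-!
Write `m⁺` for `m` with its first row deleted and the last row `e` of the identity appended below.
If `e * u = e`, as for every `u ∈ U(R)`, then `(a * u)⁺ = a⁺ * u`. Expanding along the last column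
shows that `A(R)` consists of the `a` with `det a = 1` and `a⁺ = 1`, while `M(R)` consists of
the `m` with `det m = 1` and `m⁺ ∈ U(R)`. Hence `m = a * u` forces `u = m⁺`, and
`m ↦ (m * (m⁺)⁻¹, m⁺)` is the inverse of the multiplication map.
-/

section

open Matrix

variable {n k : ℕ} {R : Type*}

/-- The square matrix obtained from `m` by deleting the first row and appending the last row of
the identity matrix; it recovers the factor `u` from a product `a * u`. -/
def shiftRowsUp [Zero R] [One R] (m : Matrix (Fin (k + 1)) (Fin (k + 1)) R) :
    Matrix (Fin (k + 1)) (Fin (k + 1)) R :=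
  of fun i j => Fin.snoc (α := fun _ => R) (fun i => m i.succ j)
    ((1 : Matrix _ _ R) (Fin.last k) j) i

section ShiftRowsUp

variable [Zero R] [One R] (m : Matrix (Fin (k + 1)) (Fin (k + 1)) R)

@[simp]
theorem shiftRowsUp_castSucc (i : Fin k) (j : Fin (k + 1)) :
    shiftRowsUp m i.castSucc j = m i.succ j := by
  simp [shiftRowsUp]

@[simp]
theorem shiftRowsUp_last (j : Fin (k + 1)) :
    shiftRowsUp m (Fin.last k) j = (1 : Matrix _ _ R) (Fin.last k) j := by
  simp [shiftRowsUp]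

variable {m}

theorem shiftRowsUp_eq_one_iff :
    shiftRowsUp m = 1 ↔ ∀ (i : Fin k) j, m i.succ j = (1 : Matrix _ _ R) i.castSucc j := by
  rw [← Matrix.ext_iff, Fin.forall_fin_succ']
  simp

end ShiftRowsUp

theorem shiftRowsUp_mul [NonAssocSemiring R] (m : Matrix (Fin (k + 1)) (Fin (k + 1)) R)
    {u : Matrix (Fin (k + 1)) (Fin (k + 1)) R}
    (hu : ∀ j, u (Fin.last k) j = (1 : Matrix _ _ R) (Fin.last k) j) :
    shiftRowsUp (m * u) = shiftRowsUp m * u := by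
  ext i j
  induction i using Fin.lastCases with
  | last =>
    calc shiftRowsUp (m * u) (Fin.last k) j
      _ = u (Fin.last k) j := by rw [shiftRowsUp_last, hu]
      _ = (shiftRowsUp m * u) (Fin.last k) j := by simp [mul_apply, one_apply]
  | cast i => simp only [shiftRowsUp_castSucc, mul_apply]

variable [CommRing R] {a m u : Matrix (Fin (k + 1)) (Fin (k + 1)) R}

theorem det_eq_of_shiftRowsUp_eq_one (ha : shiftRowsUp a = 1) :
    a.det = (-1) ^ k * a 0 (Fin.last k) := by
  rw [shiftRowsUp_eq_one_iff] at ha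
  have minor_eq_one : a.submatrix Fin.succ Fin.castSucc = 1 := by
    ext i j
    simp [ha, one_apply]
  have succ_last_eq_zero (i : Fin k) : a i.succ (Fin.last k) = 0 := by
    rw [ha, one_apply_ne (Fin.castSucc_lt_last i).ne]
  simp [det_succ_column a (Fin.last k), Fin.sum_univ_succ, minor_eq_one, succ_last_eq_zero]

theorem isSteinbergA_iff_corner :
    IsSteinbergA a ↔ a 0 (Fin.last k) = (-1) ^ k ∧ shiftRowsUp a = 1 := by
  rw [IsSteinbergA, shiftRowsUp_eq_one_iff]
  refine and_congr ⟨fun h => h 0 (Fin.last k) rfl rfl, fun h i j hi hj => ?_⟩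
    ⟨fun ⟨subdiag, off⟩ i j => ?_, fun h => ⟨?_, ?_⟩⟩
  · obtain rfl : i = 0 := Fin.ext hi
    obtain rfl : j = Fin.last k := Fin.ext hj
    exact h
  · obtain rfl | hij := eq_or_ne i.castSucc j
    · simpa using subdiag i.succ i.castSucc
    · rw [one_apply_ne hij]
      exact off i.succ j (by simp) (by simpa [Fin.ext_iff] using hij)
  · exact Fin.cases (by simp) fun i j hij => by simp_all [one_apply, Fin.ext_iff]
  · exact Fin.cases (by simp) fun i j _ hij => by simp_all [one_apply, Fin.ext_iff]

theorem isSteinbergA_iff_det : IsSteinbergA a ↔ a.det = 1 ∧ shiftRowsUp a = 1 := by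
  rw [isSteinbergA_iff_corner]
  refine and_congr_left fun ha => ?_
  rw [det_eq_of_shiftRowsUp_eq_one ha]
  have neg_one_pow_mul_self : (-1 : R) ^ k * (-1) ^ k = 1 := by simp [← mul_pow]
  grind

theorem isSteinbergM_iff : IsSteinbergM m ↔ m.det = 1 ∧ IsUniUpper (shiftRowsUp m) := by
  refine and_congr_right' (and_congr ⟨fun h => ?_, fun h => ?_⟩ ⟨fun h => ?_, fun h => ?_⟩)
  · exact Fin.lastCases (by simp) fun i => by simpa using h i.succ i.castSucc
  · refine Fin.cases (by simp) fun i j hij => ?_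
    obtain rfl : i.castSucc = j := Fin.ext (by simpa using hij)
    simpa using h i.castSucc
  · refine Fin.lastCases (fun j hj => ?_) fun i j => by simpa using h i.succ j
    rw [shiftRowsUp_last, one_apply_ne (Fin.ne_of_gt hj)]
  · exact Fin.cases (by simp) fun i j => by simpa using h i.castSucc j

namespace IsUniUpper

theorem det_eq_one {u : Matrix (Fin n) (Fin n) R} (hu : IsUniUpper u) : u.det = 1 := by
  simp [det_of_isUpperTriangular fun i j hij => hu.2 i j hij, hu.1]

theorem isUnit_det {u : Matrix (Fin n) (Fin n) R} (hu : IsUniUpper u) : IsUnit u.det := by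
  simp [hu.det_eq_one]

theorem last_apply (hu : IsUniUpper u) (j : Fin (k + 1)) :
    u (Fin.last k) j = (1 : Matrix _ _ R) (Fin.last k) j := by
  obtain rfl | hj := eq_or_ne j (Fin.last k)
  · rw [hu.1, one_apply_eq]
  · rw [hu.2 _ _ (Fin.lt_last_iff_ne_last.2 hj), one_apply_ne hj.symm]

end IsUniUpper

theorem IsSteinbergA.shiftRowsUp_mul_eq (ha : IsSteinbergA a) (hu : IsUniUpper u) :
    shiftRowsUp (a * u) = u := by
  rw [shiftRowsUp_mul a hu.last_apply, (isSteinbergA_iff_det.1 ha).2, one_mul]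

theorem IsSteinbergA.isSteinbergM_mul (ha : IsSteinbergA a) (hu : IsUniUpper u) :
    IsSteinbergM (a * u) := by
  rw [isSteinbergM_iff, ha.shiftRowsUp_mul_eq hu, det_mul, hu.det_eq_one,
    (isSteinbergA_iff_det.1 ha).1, one_mul]
  exact ⟨rfl, hu⟩

theorem IsSteinbergM.isSteinbergA_mul_inv (hm : IsSteinbergM m) :
    IsSteinbergA (m * (shiftRowsUp m)⁻¹) := by
  obtain ⟨det_m, hu⟩ := isSteinbergM_iff.1 hm
  rw [isSteinbergA_iff_det]
  constructor
  · rw [det_mul, det_m, det_nonsing_inv, hu.det_eq_one, Ring.inverse_one, one_mul]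
  · have shift_mul_cancel :
        shiftRowsUp (m * (shiftRowsUp m)⁻¹) * shiftRowsUp m = shiftRowsUp m := by
      rw [← shiftRowsUp_mul _ hu.last_apply, nonsing_inv_mul_cancel_right _ _ hu.isUnit_det]
    rw [← mul_nonsing_inv_cancel_right _ (shiftRowsUp (m * _)) hu.isUnit_det, shift_mul_cancel,
      mul_nonsing_inv _ hu.isUnit_det]

end

/-- the multiplication map `A(R) × U(R) → M(R)`, `(a, u) ↦ a·u`, is a bijection. -/
theorem stmt_8 (n : ℕ) (hn : 2 ≤ n) (R : Type*) [CommRing R] :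
    Set.BijOn
      (fun p : Matrix (Fin n) (Fin n) R × Matrix (Fin n) (Fin n) R => p.1 * p.2)
      ({a | IsSteinbergA a} ×ˢ {u | IsUniUpper u})
      {m | IsSteinbergM m} := by
  obtain ⟨k, rfl⟩ := Nat.exists_eq_succ_of_ne_zero (by lia : n ≠ 0)
  refine Set.InvOn.bijOn (f' := fun m => (m * (shiftRowsUp m)⁻¹, shiftRowsUp m)) ⟨?_, ?_⟩ ?_ ?_
  · rintro ⟨a, u⟩ ⟨ha : IsSteinbergA a, hu : IsUniUpper u⟩
    simp only [ha.shiftRowsUp_mul_eq hu, Matrix.mul_nonsing_inv_cancel_right _ _ hu.isUnit_det]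
  · exact fun m hm =>
      Matrix.nonsing_inv_mul_cancel_right _ _ (isSteinbergM_iff.1 hm).2.isUnit_det
  · exact fun p hp => hp.1.isSteinbergM_mul hp.2
  · exact fun m hm => ⟨hm.isSteinbergA_mul_inv, (isSteinbergM_iff.1 hm).2⟩
end

section
/- Let R be a commutative ℂ-algebra. For every sequence m : ℤ → M(R) there exists a unique sequence u : ℤ → U(R) such that u(s)·m(s)·u(s+1)⁻¹ ∈ A(R) for every s ∈ ℤ. That is, the group U(R)^ℤ acts freely on M(R)^ℤ by the discrete gauge transformation (u·m)(s) = u(s)·m(s)·u(s+1)⁻¹, and A(R)^ℤ is a cross-section for this action. -/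
/-!
A matrix `a` with `det a = 1` lies in `A(R)` if and only if its rows below the top one are
`e₀, …, e_{N-1}`, because the determinant then equals `(-1) ^ N` times the upper right corner.
Hence `u s * m s * (u (s + 1))⁻¹ ∈ A(R)` says exactly that row `i` of `u (s + 1)` is row `i + 1` of
`u s * m s`. Since the last row of a unitriangular matrix is `e_N`, this recursion determines all
rows of all `u s`, from the bottom row upwards. Conversely its solution is unitriangular, because
multiplication by an element of `M(R)` moves the leading one of a row vector one place to the left.

The shift `s ↦ s + 1` may be replaced by any permutation of any index type; on a one-point type one
gets the cross-section for the conjugation action of `U(R)` on `M(R)`.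
-/

open Matrix

section LeadingOne

variable {R : Type*} [Semiring R]

/-- The first nonzero entry of the row vector `v` is a `1` in position `i`. -/
def HasLeadingOneAt {n : ℕ} (i : Fin n) (v : Fin n → R) : Prop :=
  v i = 1 ∧ ∀ j < i, v j = 0

lemma hasLeadingOneAt_last_iff {N : ℕ} {v : Fin (N + 1) → R} :
    HasLeadingOneAt (Fin.last N) v ↔ v = Pi.single (Fin.last N) 1 := by
  constructor
  · rintro ⟨hone, hzero⟩
    ext j
    rcases (Fin.le_last j).eq_or_lt with rfl | hj
    · rw [hone, Pi.single_eq_same]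
    · rw [hzero j hj, Pi.single_eq_of_ne hj.ne]
  · rintro rfl
    exact ⟨Pi.single_eq_same _ _, fun j hj => Pi.single_eq_of_ne hj.ne _⟩

lemma HasLeadingOneAt.vecMul_hessenberg {N : ℕ} {i : Fin N} {v : Fin (N + 1) → R}
    {m : Matrix (Fin (N + 1)) (Fin (N + 1)) R} (hv : HasLeadingOneAt i.succ v)
    (hsub : m i.succ i.castSucc = 1)
    (hzero : ∀ k j : Fin (N + 1), (j : ℕ) + 1 < (k : ℕ) → m k j = 0) :
    HasLeadingOneAt i.castSucc (v ᵥ* m) := by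
  constructor
  · calc (v ᵥ* m) i.castSucc = v i.succ * m i.succ i.castSucc := by
          simp only [vecMul, dotProduct]
          refine Fintype.sum_eq_single i.succ fun k hk => ?_
          rcases hk.lt_or_gt with hlt | hgt
          · rw [hv.2 k hlt, zero_mul]
          · rw [hzero k i.castSucc hgt, mul_zero]
      _ = 1 := by rw [hv.1, hsub, one_mul]
  · intro j hj
    simp only [vecMul, dotProduct]
    refine Finset.sum_eq_zero fun k _ => ?_
    rcases lt_or_ge k i.succ with hlt | hge
    · rw [hv.2 k hlt, zero_mul]
    · rw [hzero k j ((Nat.succ_lt_succ hj).trans_le hge), mul_zero]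

end LeadingOne

section GaugeMatrix

variable {S R : Type*} [Semiring R] {N : ℕ} (σ : Equiv.Perm S)
  (m : S → Matrix (Fin (N + 1)) (Fin (N + 1)) R)

/-- The gauge transformation bringing `m` into the cross-section, for the time step `σ`: its last
row is `e_N`, and row `i` at time `s` is row `i + 1` at the preceding time `σ.symm s`, multiplied by
the value of `m` there. -/
def gaugeMatrix (s : S) : Matrix (Fin (N + 1)) (Fin (N + 1)) R :=
  .of fun i => Fin.reverseInduction (motive := fun _ => S → Fin (N + 1) → R)
    (fun _ => Pi.single (Fin.last N) 1)
    (fun _ row t => row (σ.symm t) ᵥ* m (σ.symm t)) i s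

lemma gaugeMatrix_last (s : S) :
    gaugeMatrix σ m s (Fin.last N) = Pi.single (Fin.last N) 1 := by
  ext j
  simp [gaugeMatrix]

lemma gaugeMatrix_castSucc (s : S) (i : Fin N) :
    gaugeMatrix σ m (σ s) i.castSucc = gaugeMatrix σ m s i.succ ᵥ* m s := by
  ext j
  simp [gaugeMatrix, vecMul, dotProduct]

variable {σ m}

lemma eq_gaugeMatrix {u : S → Matrix (Fin (N + 1)) (Fin (N + 1)) R}
    (hlast : ∀ s, u s (Fin.last N) = Pi.single (Fin.last N) 1)
    (hrec : ∀ s (i : Fin N), u (σ s) i.castSucc = u s i.succ ᵥ* m s) :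
    u = gaugeMatrix σ m := by
  suffices hrow : ∀ i s, u s i = gaugeMatrix σ m s i from funext fun s => funext fun i => hrow i s
  intro i
  induction i using Fin.reverseInduction with
  | last => exact fun s => (hlast s).trans (gaugeMatrix_last σ m s).symm
  | cast i ih =>
    refine σ.forall_congr_right.1 fun s => ?_
    rw [hrec, gaugeMatrix_castSucc, ih]

end GaugeMatrix

section Unitriangular

variable {R : Type*} [CommRing R]

lemma isUniUpper_iff_hasLeadingOneAt {n : ℕ} {u : Matrix (Fin n) (Fin n) R} :
    IsUniUpper u ↔ ∀ i, HasLeadingOneAt i (u i) :=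
  forall_and.symm

lemma IsUniUpper.det_eq_one_s9 {n : ℕ} {u : Matrix (Fin n) (Fin n) R} (hu : IsUniUpper u) :
    u.det = 1 := by
  have htri : u.BlockTriangular id := fun i j hij => hu.2 i j hij
  rw [det_of_isUpperTriangular htri]
  exact Finset.prod_eq_one fun i _ => hu.1 i

lemma IsUniUpper.row_last {N : ℕ} {u : Matrix (Fin (N + 1)) (Fin (N + 1)) R} (hu : IsUniUpper u) :
    u (Fin.last N) = Pi.single (Fin.last N) 1 :=
  hasLeadingOneAt_last_iff.1 (isUniUpper_iff_hasLeadingOneAt.1 hu _)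

lemma isUniUpper_gaugeMatrix {S : Type*} {N : ℕ} (σ : Equiv.Perm S)
    {m : S → Matrix (Fin (N + 1)) (Fin (N + 1)) R}
    (hsub : ∀ s (i : Fin N), m s i.succ i.castSucc = 1)
    (hzero : ∀ s (k j : Fin (N + 1)), (j : ℕ) + 1 < (k : ℕ) → m s k j = 0) (s : S) :
    IsUniUpper (gaugeMatrix σ m s) := by
  refine isUniUpper_iff_hasLeadingOneAt.2 fun i => ?_
  induction i using Fin.reverseInduction generalizing s with
  | last => exact hasLeadingOneAt_last_iff.2 (gaugeMatrix_last σ m s)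
  | cast i ih =>
    obtain ⟨t, rfl⟩ := σ.surjective s
    rw [gaugeMatrix_castSucc]
    exact (ih t).vecMul_hessenberg (hsub t i) (hzero t)

end Unitriangular

section CrossSection

variable {R : Type*} [CommRing R] {N : ℕ} {a v : Matrix (Fin (N + 1)) (Fin (N + 1)) R}

lemma det_eq_neg_one_pow_mul_corner
    (h : ∀ i : Fin N, a i.succ = Pi.single i.castSucc 1) :
    a.det = (-1) ^ N * a 0 (Fin.last N) := by
  have hminor : a.submatrix Fin.succ Fin.castSucc = 1 := by
    ext i j
    simp [h, one_apply, Pi.single_apply, eq_comm]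
  rw [det_succ_column a (Fin.last N), Fin.sum_univ_succ]
  simp [h, hminor]

lemma isSteinbergA_iff_of_det_eq_one (hdet : a.det = 1) :
    IsSteinbergA a ↔ ∀ i : Fin N, a i.succ = Pi.single i.castSucc 1 := by
  constructor
  · rintro ⟨-, hsub, hzero⟩ i
    ext j
    rcases eq_or_ne j i.castSucc with rfl | hj
    · rw [hsub _ _ rfl, Pi.single_eq_same]
    · rw [hzero _ _ (Nat.succ_ne_zero i) fun hij => hj (Fin.ext (Nat.succ.inj hij).symm),
        Pi.single_eq_of_ne hj]
  · intro h
    have hcorner : a 0 (Fin.last N) = (-1) ^ N := by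
      rw [det_eq_neg_one_pow_mul_corner h] at hdet
      calc a 0 (Fin.last N) = (-1) ^ N * ((-1) ^ N * a 0 (Fin.last N)) := by
            rw [← mul_assoc, ← mul_pow, neg_one_mul, neg_neg, one_pow, one_mul]
        _ = (-1) ^ N := by rw [hdet, mul_one]
    refine ⟨fun i j hi hj => ?_, fun i j hij => ?_, fun i j hi hij => ?_⟩
    · obtain rfl : i = 0 := Fin.ext hi
      obtain rfl : j = Fin.last N := Fin.ext hj
      exact hcorner
    · obtain ⟨i, rfl⟩ := Fin.exists_succ_eq.2 (show i ≠ 0 by rintro rfl; simp at hij)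
      obtain rfl : j = i.castSucc := Fin.ext (Nat.succ.inj hij).symm
      rw [h, Pi.single_eq_same]
    · obtain ⟨i, rfl⟩ := Fin.exists_succ_eq.2 (Fin.val_ne_zero_iff.1 hi)
      rw [h, Pi.single_eq_of_ne]
      rintro rfl
      exact hij rfl

lemma isSteinbergA_mul_inv_iff (ha : a.det = 1) (hv : v.det = 1) :
    IsSteinbergA (a * v⁻¹) ↔ ∀ i : Fin N, v i.castSucc = a i.succ := by
  have hunit : IsUnit v.det := hv ▸ isUnit_one
  have hdet : (a * v⁻¹).det = 1 := by simp [det_nonsing_inv, ha, hv]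
  rw [isSteinbergA_iff_of_det_eq_one hdet]
  refine forall_congr' fun i => ?_
  rw [mul_apply_eq_vecMul]
  constructor
  · intro h
    calc v i.castSucc = Pi.single i.castSucc 1 ᵥ* v := (single_one_vecMul _ _).symm
      _ = a i.succ := by rw [← h, vecMul_vecMul, nonsing_inv_mul _ hunit, vecMul_one]
  · intro h
    calc a i.succ ᵥ* v⁻¹ = (v * v⁻¹) i.castSucc := by rw [← h, mul_apply_eq_vecMul]
      _ = Pi.single i.castSucc 1 := by
        rw [mul_nonsing_inv _ hunit]; exact funext fun _ => one_eq_pi_single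

end CrossSection

theorem stmt_9_general {S R : Type*} [CommRing R] {N : ℕ} (σ : Equiv.Perm S)
    (m : S → Matrix (Fin (N + 1)) (Fin (N + 1)) R) (hm : ∀ s, IsSteinbergM (m s)) :
    ∃! u : S → Matrix (Fin (N + 1)) (Fin (N + 1)) R,
      (∀ s, IsUniUpper (u s)) ∧ ∀ s, IsSteinbergA (u s * m s * (u (σ s))⁻¹) := by
  have hrows (u : S → Matrix (Fin (N + 1)) (Fin (N + 1)) R) (hu : ∀ s, IsUniUpper (u s)) (s : S) :
      IsSteinbergA (u s * m s * (u (σ s))⁻¹) ↔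
        ∀ i : Fin N, u (σ s) i.castSucc = u s i.succ ᵥ* m s := by
    have hdet : (u s * m s).det = 1 := by rw [det_mul, (hu s).det_eq_one_s9, (hm s).1, one_mul]
    exact isSteinbergA_mul_inv_iff hdet (hu (σ s)).det_eq_one_s9
  have huni : ∀ s, IsUniUpper (gaugeMatrix σ m s) :=
    isUniUpper_gaugeMatrix σ (fun s _ => (hm s).2.1 _ _ rfl) fun s => (hm s).2.2
  refine ⟨gaugeMatrix σ m, ⟨huni, fun s => (hrows _ huni s).2 (gaugeMatrix_castSucc σ m s)⟩, ?_⟩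
  rintro u ⟨hu, hA⟩
  exact eq_gaugeMatrix (fun s => (hu s).row_last) fun s => (hrows u hu s).1 (hA s)

/-- for every sequence `m : ℤ → M(R)` over a commutative `ℂ`-algebra `R` there is a
unique sequence `u : ℤ → U(R)` with `u(s)·m(s)·u(s+1)⁻¹ ∈ A(R)` for every `s`: the group
`U(R)^ℤ` acts freely on `M(R)^ℤ` by the discrete gauge transformation and `A(R)^ℤ` is a
cross-section. -/
theorem stmt_9 (n : ℕ) (hn : 2 ≤ n) (R : Type*) [CommRing R] [Algebra ℂ R]
    (m : ℤ → Matrix (Fin n) (Fin n) R) (hm : ∀ s : ℤ, IsSteinbergM (m s)) :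
    ∃! u : ℤ → Matrix (Fin n) (Fin n) R,
      (∀ s : ℤ, IsUniUpper (u s)) ∧
      ∀ s : ℤ, IsSteinbergA (u s * m s * (u (s + 1))⁻¹) := by
  obtain ⟨N, rfl⟩ : ∃ N, n = N + 1 := Nat.exists_eq_add_one.2 (Nat.zero_lt_of_lt hn)
  exact stmt_9_general (Equiv.addRight 1) m hm
end

section
/- Let (K, σ) be a difference field and β ∈ K a nonzero element, and let f be the 2×2 matrix [[β, 0], [1, β⁻¹]]. Then there is a unique upper unitriangular 2×2 matrix u over K such that σ(u)·f·u⁻¹ lies in A(K), namely u = [[1, β⁻¹], [0, 1]]; and for this u one has σ(u)·f·u⁻¹ = [[β + σ(β)⁻¹, −1], [1, 0]]. (This is the q-difference Miura transformation formula θ₁(z) = β₁(z) + 1/β₁(qz) for SL(2).) -/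
/-! Let `f = [[a, b], [1, d]]` have determinant `1` and let `u = [[1, x], [0, 1]]`. The lower right
entry of `σ(u)·f·u⁻¹` is `d - x`, which does not involve `σ`, so the cross-section condition
forces `x = d`. For this `x` the lower row is `(1, 0)` and the `σ`-terms in the upper right entry
cancel, which leaves `b - a * d = -det f = -1`. -/

section FinTwo

variable {R : Type*} [CommRing R]

theorem isUniUpper_fin_two_iff_exists {u : Matrix (Fin 2) (Fin 2) R} :
    IsUniUpper u ↔ ∃ x, u = !![1, x; 0, 1] := by
  constructor
  · rintro ⟨hdiag, hlower⟩
    refine ⟨u 0 1, ?_⟩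
    rw [Matrix.eta_fin_two u, hdiag 0, hdiag 1, hlower 1 0 Nat.zero_lt_one]
    rfl
  · rintro ⟨x, rfl⟩
    simp [IsUniUpper, Fin.forall_fin_two]

theorem isSteinbergA_fin_two_iff_exists {m : Matrix (Fin 2) (Fin 2) R} :
    IsSteinbergA m ↔ ∃ a, m = !![a, -1; 1, 0] := by
  constructor
  · rintro ⟨hcorner, hsub, hzero⟩
    refine ⟨m 0 0, ?_⟩
    rw [Matrix.eta_fin_two m, hcorner 0 1 rfl rfl, hsub 1 0 rfl,
      hzero 1 1 (by decide) (by decide)]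
    simp
  · rintro ⟨a, rfl⟩
    simp [IsSteinbergA, Fin.forall_fin_two]

theorem inv_upperUnitriangular_fin_two (x : R) :
    (!![1, x; 0, 1] : Matrix (Fin 2) (Fin 2) R)⁻¹ = !![1, -x; 0, 1] :=
  Matrix.inv_eq_right_inv (by simp [Matrix.one_fin_two])

theorem map_mul_mul_inv_upperUnitriangular_fin_two (σ : R →+* R) (a b c d x : R) :
    (!![1, x; 0, 1]).map σ * !![a, b; c, d] * (!![1, x; 0, 1] : Matrix (Fin 2) (Fin 2) R)⁻¹ =
      !![a + σ x * c, b + σ x * d - x * (a + σ x * c); c, d - x * c] := by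
  have hmap : (!![1, x; 0, 1]).map σ = !![1, σ x; 0, 1] := by
    simp [← Matrix.ext_iff, Fin.forall_fin_two]
  rw [hmap, inv_upperUnitriangular_fin_two, Matrix.mul_fin_two, Matrix.mul_fin_two]
  ext i j
  fin_cases i <;> fin_cases j <;> dsimp <;> ring

variable (σ : R →+* R) {f : Matrix (Fin 2) (Fin 2) R}

theorem eq_of_isSteinbergA_map_mul_mul_inv (hf : f 1 0 = 1) {x : R}
    (hA : IsSteinbergA ((!![1, x; 0, 1]).map σ * f * (!![1, x; 0, 1])⁻¹)) : x = f 1 1 := by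
  obtain ⟨a, ha⟩ := isSteinbergA_fin_two_iff_exists.mp hA
  rw [Matrix.eta_fin_two f, map_mul_mul_inv_upperUnitriangular_fin_two, hf] at ha
  have hzero : f 1 1 - x * 1 = 0 := congr_fun₂ ha 1 1
  linear_combination -hzero

theorem map_mul_mul_inv_eq_of_det_eq_one (hf : f 1 0 = 1) (hdet : f.det = 1) :
    (!![1, f 1 1; 0, 1]).map σ * f * (!![1, f 1 1; 0, 1])⁻¹ =
      !![f 0 0 + σ (f 1 1), -1; 1, 0] := by
  have hcorner : f 0 1 + σ (f 1 1) * f 1 1 - f 1 1 * (f 0 0 + σ (f 1 1)) = -1 := by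
    rw [Matrix.det_fin_two, hf] at hdet
    linear_combination -hdet
  conv_lhs => rw [Matrix.eta_fin_two f]
  simpa [hf, hcorner] using
    map_mul_mul_inv_upperUnitriangular_fin_two σ (f 0 0) (f 0 1) (f 1 0) (f 1 1) (f 1 1)

end FinTwo

theorem stmt_13_general {R : Type*} [CommRing R] (σ : R →+* R) {f : Matrix (Fin 2) (Fin 2) R}
    (hf : f 1 0 = 1) (hdet : f.det = 1) :
    (∃! u : Matrix (Fin 2) (Fin 2) R, IsUniUpper u ∧ IsSteinbergA (u.map σ * f * u⁻¹)) ∧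
    (∀ u : Matrix (Fin 2) (Fin 2) R,
      IsUniUpper u → IsSteinbergA (u.map σ * f * u⁻¹) → u = !![1, f 1 1; 0, 1]) ∧
    (!![1, f 1 1; 0, 1]).map σ * f * (!![1, f 1 1; 0, 1])⁻¹ =
      !![f 0 0 + σ (f 1 1), -1; 1, 0] := by
  have hform := map_mul_mul_inv_eq_of_det_eq_one σ hf hdet
  have huniq (u : Matrix (Fin 2) (Fin 2) R) (hu : IsUniUpper u)
      (hA : IsSteinbergA (u.map σ * f * u⁻¹)) : u = !![1, f 1 1; 0, 1] := by
    obtain ⟨x, rfl⟩ := isUniUpper_fin_two_iff_exists.mp hu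
    rw [eq_of_isSteinbergA_map_mul_mul_inv σ hf hA]
  refine ⟨⟨!![1, f 1 1; 0, 1], ⟨?_, ?_⟩, fun u hu => huniq u hu.1 hu.2⟩, huniq, hform⟩
  · exact isUniUpper_fin_two_iff_exists.mpr ⟨_, rfl⟩
  · exact isSteinbergA_fin_two_iff_exists.mpr ⟨_, hform⟩

/-- for a difference field `(K, σ)` and `β ≠ 0`, with `f = [[β, 0], [1, β⁻¹]]`,
there is a unique upper unitriangular `u` with `σ(u)·f·u⁻¹ ∈ A(K)`, namely
`u = [[1, β⁻¹], [0, 1]]`, and then `σ(u)·f·u⁻¹ = [[β + σ(β)⁻¹, −1], [1, 0]]` (the q-difference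
Miura transformation for `SL(2)`). -/
theorem stmt_13 (K : Type*) [Field K] (σ : K ≃+* K) (β : K) (hβ : β ≠ 0) :
    (∃! u : Matrix (Fin 2) (Fin 2) K,
      IsUniUpper u ∧ IsSteinbergA (u.map σ * !![β, 0; 1, β⁻¹] * u⁻¹)) ∧
    (∀ u : Matrix (Fin 2) (Fin 2) K,
      IsUniUpper u → IsSteinbergA (u.map σ * !![β, 0; 1, β⁻¹] * u⁻¹) →
        u = !![1, β⁻¹; 0, 1]) ∧
    (!![1, β⁻¹; 0, 1]).map σ * !![β, 0; 1, β⁻¹] * (!![1, β⁻¹; 0, 1] : Matrix (Fin 2) (Fin 2) K)⁻¹ =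
      !![β + (σ β)⁻¹, -1; 1, 0] := by
  rw [← map_inv₀ σ β]
  exact stmt_13_general (σ : K →+* K) (f := !![β, 0; 1, β⁻¹]) rfl (by simp [Matrix.det_fin_two, hβ])
end

section
/- Let R be a commutative ring and g : ℤ → SL(n, R) an (SL(n), c)-band over R. Then for all s ∈ ℤ, all 1 ≤ i ≤ n−1, all 1 ≤ k ≤ n−i, and every i-element subset J of columns, the minor of g(s) on the rows {k+1, k+2, …, k+i} and the columns J equals the minor of g(s+1) on the rows {k, k+1, …, k+i−1} and the columns J. (This is the SL(n) instance of the gluing relations Δ^{(s)}_{c^k(ϖ_i), w(ϖ_i)} = Δ^{(s+1)}_{c^{k−1}(ϖ_i), w(ϖ_i)} for 1 ≤ k ≤ m_i, where m_i = n−i for the standard Coxeter element.) -/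
namespace IsSteinbergA

variable {n : ℕ} {R : Type*} [CommRing R] {m : Matrix (Fin n) (Fin n) R} {i j : Fin n}

theorem row_eq_single (hm : IsSteinbergA m) (hij : (i : ℕ) = j + 1) : m i = Pi.single j 1 := by
  obtain ⟨-, subdiagonal_eq_one, eq_zero⟩ := hm
  ext l
  obtain rfl | hl := eq_or_ne l j
  · rw [subdiagonal_eq_one i l hij, Pi.single_eq_same]
  · rw [eq_zero i l (by omega) (by omega), Pi.single_eq_of_ne hl]

theorem mul_row_eq {p : Type*} (hm : IsSteinbergA m) (h : Matrix (Fin n) p R)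
    (hij : (i : ℕ) = j + 1) : (m * h) i = h j := by
  rw [Matrix.mul_apply_eq_vecMul, hm.row_eq_single hij, Matrix.single_one_vecMul, Matrix.row]

end IsSteinbergA

theorem stmt_16_general {n : ℕ} {R ι p : Type*} [CommRing R] [Fintype ι] [DecidableEq ι]
    {m : Matrix (Fin n) (Fin n) R} (hm : IsSteinbergA m) (h : Matrix (Fin n) p R)
    {rows rows' : ι → Fin n} (hrows : ∀ a, (rows a : ℕ) = rows' a + 1) (cols : ι → p) :
    ((m * h).submatrix rows cols).det = (h.submatrix rows' cols).det := by
  congr 1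
  ext a b
  exact congrFun (hm.mul_row_eq h (hrows a)) (cols b)

/-- for an `(SL(n), c)`-band `g`, all `s ∈ ℤ`, `1 ≤ i ≤ n−1`, `1 ≤ k ≤ n−i` and
every `i`-element set of columns `J`, the minor of `g(s)` on the rows `{k+1, …, k+i}` (1-based)
and columns `J` equals the minor of `g(s+1)` on the rows `{k, …, k+i−1}` and columns `J`
(the gluing relations `Δ^{(s)}_{c^k(ϖ_i), w(ϖ_i)} = Δ^{(s+1)}_{c^{k−1}(ϖ_i), w(ϖ_i)}`). -/
theorem stmt_16 (n : ℕ) (hn : 2 ≤ n) (R : Type*) [CommRing R]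
    (g : ℤ → Matrix.SpecialLinearGroup (Fin n) R)
    (hg : ∀ s : ℤ, IsSteinbergA
      ((g s * (g (s + 1))⁻¹ : Matrix.SpecialLinearGroup (Fin n) R) : Matrix (Fin n) (Fin n) R))
    (s : ℤ) (i k : ℕ) (hi1 : 1 ≤ i) (hi2 : i ≤ n - 1) (hk1 : 1 ≤ k) (hk2 : k ≤ n - i)
    (J : Finset (Fin n)) (hJ : J.card = i) :
    Matrix.det (Matrix.of fun a b : Fin i =>
      (g s : Matrix (Fin n) (Fin n) R)
        ⟨k + (a : ℕ), by have := a.isLt; omega⟩ ((J.orderIsoOfFin hJ b : Fin n))) =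
    Matrix.det (Matrix.of fun a b : Fin i =>
      (g (s + 1) : Matrix (Fin n) (Fin n) R)
        ⟨k - 1 + (a : ℕ), by have := a.isLt; omega⟩ ((J.orderIsoOfFin hJ b : Fin n))) := by
  rw [← inv_mul_cancel_right (g s) (g (s + 1)), Matrix.SpecialLinearGroup.coe_mul]
  exact stmt_16_general (hg s) _ (fun a => by dsimp only; omega) _
end
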